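/- arXiv:2303.06385 — 2 statements merged into one kernel-verified Lean document; each statement's English description precedes it below -/
import Mathlib

section
/- Let p be an odd prime, m ≥ 1, and K the group of order p^{5m} with presentation ⟨a,b | a^{[a,b]}=a^α, b^{[b,a]}=b^α, a^{p^{2m}}=b^{p^{2m}}=[a,b]^{p^m}=1⟩ where v_p(α-1)=m. For every pair (u,v) ∈ Z(K) × Z(K), the assignment a ↦ au, b ↦ bv extends to a central automorphism of K fixing Z_2(K) pointwise, and the resulting map Z(K) × Z(K) → Aut(K) is an injective group homomorphism whose image is exactly Aut_1(K), the group of central automorphisms; in particular |Aut_1(K)| = p^{4m}. -/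
/-- Relators of the Macdonald-type group `K(α)`:
`a^{[a,b]} = a^α`, `b^{[b,a]} = b^α`, `a^{p^{2m}} = 1`, `b^{p^{2m}} = 1`, `[a,b]^{p^m} = 1`,
with the convention `[a,b] = a⁻¹b⁻¹ab` and `x^y = y⁻¹xy`. -/
def kRels (p m : ℕ) (α : ℤ) : Set (FreeGroup (Fin 2)) :=
  let a : FreeGroup (Fin 2) := FreeGroup.of 0
  let b : FreeGroup (Fin 2) := FreeGroup.of 1
  let c : FreeGroup (Fin 2) := a⁻¹ * b⁻¹ * a * b
  {(c⁻¹ * a * c) * (a ^ α)⁻¹, (c * b * c⁻¹) * (b ^ α)⁻¹,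
    a ^ (p ^ (2 * m)), b ^ (p ^ (2 * m)), c ^ (p ^ m)}

/-- The group `K(α)` of order `p^{5m}`. -/
abbrev KGroup (p m : ℕ) (α : ℤ) := PresentedGroup (kRels p m α)

/-- `v_p(α - 1) = m`. -/
def vCond (p m : ℕ) (α : ℤ) : Prop :=
  (p : ℤ) ^ m ∣ α - 1 ∧ ¬ (p : ℤ) ^ (m + 1) ∣ α - 1

/-- The extra condition required when `p = 3` and `m = 1`. -/
def specialCond (p m : ℕ) (α : ℤ) : Prop :=
  p = 3 ∧ m = 1 → (α - 1) / 3 ≡ 1 [ZMOD 3]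

/-- `autC T i` is `Aut_i(T)`: automorphisms `g` with `g t * t⁻¹ ∈ Z_i(T)` for all `t`. -/
def autC (T : Type*) [Group T] (i : ℕ) : Subgroup (MulAut T) where
  carrier := {g | ∀ t : T, g t * t⁻¹ ∈ upperCentralSeries T i}
  one_mem' := by intro t; simpa using (upperCentralSeries T i).one_mem
  mul_mem' := by
    intro g h hg hh t
    have h1 := hg (h t)
    have h2 := hh t
    have : (g * h) t * t⁻¹ = (g (h t) * (h t)⁻¹) * (h t * t⁻¹) := by
      simp [MulAut.mul_apply, mul_assoc]
    rw [this]
    exact mul_mem h1 h2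
  inv_mem' := by
    intro g hg t
    have h1 := hg (g⁻¹ t)
    have h2 : g (g⁻¹ t) = t := by simp
    rw [h2] at h1
    have h3 := (upperCentralSeries T i).inv_mem h1
    simpa using h3

/-- The defining relations, for elements of an arbitrary group. -/
structure KRel {G : Type*} [Group G] (q : ℕ) (l : ℤ) (a b : G) : Prop where
  h1 : (a⁻¹ * b⁻¹ * a * b)⁻¹ * a * (a⁻¹ * b⁻¹ * a * b) = a ^ (1 + q * l)
  h2 : (a⁻¹ * b⁻¹ * a * b) * b * (a⁻¹ * b⁻¹ * a * b)⁻¹ = b ^ (1 + q * l)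
  h3 : a ^ (q ^ 2) = 1
  h4 : b ^ (q ^ 2) = 1
  h5 : (a⁻¹ * b⁻¹ * a * b) ^ q = 1

theorem KRel.symm {G : Type*} [Group G] {q : ℕ} {l : ℤ} {a b : G} (h : KRel q l a b) :
    KRel q l b a := by
  have e : b⁻¹ * a⁻¹ * b * a = (a⁻¹ * b⁻¹ * a * b)⁻¹ := by group
  refine ⟨?_, ?_, h.h4, h.h3, ?_⟩
  · rw [e, inv_inv]; exact h.h2
  · rw [e, inv_inv]; exact h.h1
  · rw [e, inv_pow, h.h5, inv_one]

theorem pow_mul_aux {G : Type*} [Group G] {a c w : G} (hc : c * a = a * c * w)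
    (hwc : Commute w c) (n : ℕ) : c ^ n * a = a * c ^ n * w ^ n := by
  induction n with
  | zero => simp
  | succ n ih =>
    calc c ^ (n+1) * a = c ^ n * (c * a) := by rw [pow_succ, mul_assoc]
      _ = (c ^ n * a) * c * w := by rw [hc]; group
      _ = a * c ^ n * (w ^ n * c) * w := by rw [ih]; group
      _ = a * c ^ (n+1) * w ^ (n+1) := by
        rw [(hwc.pow_left n).eq, pow_succ, pow_succ]; group

theorem mul_pow_aux {G : Type*} [Group G] {a c w : G} (hc : c * a = a * c * w)
    (hwa : Commute w a) (hwc : Commute w c) (n : ℕ) :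
    (a * c) ^ n = a ^ n * c ^ n * w ^ (∑ i ∈ Finset.range n, i) := by
  induction n with
  | zero => simp
  | succ n ih =>
    have e : Commute (w ^ (∑ i ∈ Finset.range n, i)) (a * c) := (hwa.mul_right hwc).pow_left _
    rw [pow_succ, ih, mul_assoc, e.eq, Finset.sum_range_succ,
      add_comm (∑ i ∈ Finset.range n, i) n, pow_add w]
    generalize w ^ (∑ i ∈ Finset.range n, i) = v
    have := pow_mul_aux hc hwc n
    calc a ^ n * c ^ n * (a * c * v) = a ^ n * (c ^ n * a) * c * v := by group
      _ = a ^ n * a * c ^ n * (w ^ n * c) * v := by rw [this]; group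
      _ = _ := by rw [(hwc.pow_left n).eq, pow_succ, pow_succ]; group

theorem KRel.comm_c {G : Type*} [Group G] {q : ℕ} {l : ℤ} {a b : G} (h : KRel q l a b) :
    Commute (a ^ q) (a⁻¹ * b⁻¹ * a * b) := by
  have h1 := h.h1
  generalize a⁻¹ * b⁻¹ * a * b = c at h1
  have : c⁻¹ * a ^ q * c = a ^ q := by
    have e : c⁻¹ * a ^ q * c = (c⁻¹ * a * c) ^ q := by
      have := conj_pow (i := q) (a := c⁻¹) (b := a)
      simpa using this.symm
    rw [e, h1, ← zpow_natCast, ← zpow_mul]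
    have : (1 + (q:ℤ) * l) * q = q + ((q ^ 2 : ℕ) : ℤ) * l := by push_cast; ring
    rw [this, zpow_add, zpow_mul, zpow_natCast, zpow_natCast, h.h3]; simp
  calc a ^ q * c = c * (c⁻¹ * a ^ q * c) := by group
    _ = _ := by rw [this]

/-- `c * a = a * c * z^{-l}`. -/
theorem KRel.ca {G : Type*} [Group G] {q : ℕ} {l : ℤ} {a b : G} (h : KRel q l a b) :
    (a⁻¹ * b⁻¹ * a * b) * a = a * (a⁻¹ * b⁻¹ * a * b) * (a ^ q) ^ (-l) := by
  have hc := h.comm_c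
  have h1 := h.h1
  generalize a⁻¹ * b⁻¹ * a * b = c at h1 hc
  have e : a * c = c * (a * (a ^ q) ^ l) := by
    rw [zpow_add, zpow_mul, zpow_one, zpow_natCast] at h1
    rw [← h1]; group
  rw [e, mul_assoc, mul_assoc, zpow_neg, mul_inv_cancel, mul_one]

theorem KRel.comm_b {G : Type*} [Group G] {q : ℕ} (hq : Odd q) {l : ℤ} {a b : G}
    (h : KRel q l a b) : Commute (a ^ q) b := by
  have hc := h.comm_c
  have hca := h.ca
  have h5 := h.h5
  have hb : b⁻¹ * a * b = a * (a⁻¹ * b⁻¹ * a * b) := by group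
  generalize a⁻¹ * b⁻¹ * a * b = c at *
  have key : (a * c) ^ q = a ^ q := by
    rw [mul_pow_aux hca (((Commute.refl a).pow_left q).zpow_left _) (hc.zpow_left _), h5,
      Finset.sum_range_id]
    obtain ⟨k, hk⟩ := hq
    have : q * (q - 1) / 2 = q * k := by
      have : q - 1 = k * 2 := by omega
      rw [this, ← mul_assoc, Nat.mul_div_cancel _ (by norm_num)]
    rw [this, pow_mul, ← zpow_natCast ((a^q)^(-l)), ← zpow_mul, mul_comm (-l), zpow_mul,
      zpow_natCast, ← pow_mul, ← sq, h.h3]; simp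
  have : b⁻¹ * a ^ q * b = a ^ q := by
    have e : b⁻¹ * a ^ q * b = (b⁻¹ * a * b) ^ q := by
      have := conj_pow (i := q) (a := b⁻¹) (b := a)
      simpa using this.symm
    rw [e, hb, key]
  calc a ^ q * b = b * (b⁻¹ * a ^ q * b) := by group
    _ = _ := by rw [this]

theorem mem_center_of_comm {G : Type*} [Group G] {a b z : G}
    (hcl : Subgroup.closure {a, b} = ⊤) (h1 : Commute z a) (h2 : Commute z b) :
    z ∈ Subgroup.center G := by
  rw [Subgroup.mem_center_iff]
  have : Subgroup.closure {a, b} ≤ Subgroup.centralizer {z} := by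
    rw [Subgroup.closure_le]
    rintro x (rfl | rfl)
    · exact Subgroup.mem_centralizer_iff.2 (by rintro _ rfl; exact h1.eq)
    · exact Subgroup.mem_centralizer_iff.2 (by rintro _ rfl; exact h2.eq)
  intro g
  have hg := this (hcl ▸ Subgroup.mem_top g)
  exact (Subgroup.mem_centralizer_iff.1 hg z rfl).symm

theorem KRel.center_a {G : Type*} [Group G] {q : ℕ} (hq : Odd q) {l : ℤ} {a b : G}
    (h : KRel q l a b) (hcl : Subgroup.closure {a, b} = ⊤) : a ^ q ∈ Subgroup.center G :=
  mem_center_of_comm hcl ((Commute.refl a).pow_left q) (h.comm_b hq)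

theorem KRel.center_b {G : Type*} [Group G] {q : ℕ} (hq : Odd q) {l : ℤ} {a b : G}
    (h : KRel q l a b) (hcl : Subgroup.closure {a, b} = ⊤) : b ^ q ∈ Subgroup.center G :=
  h.symm.center_a hq (by rwa [Set.pair_comm])

theorem nf_comm {G : Type*} [Group G] {a b : G} (hcl : Subgroup.closure {a, b} = ⊤)
    (hab : Commute a b) (g : G) : ∃ i j : ℤ, g = a ^ i * b ^ j := by
  have hg : g ∈ Subgroup.closure {a, b} := hcl ▸ Subgroup.mem_top g
  induction hg using Subgroup.closure_induction with
  | mem x hx =>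
    rcases hx with rfl | rfl
    · exact ⟨1, 0, by simp⟩
    · exact ⟨0, 1, by simp⟩
  | one => exact ⟨0, 0, by simp⟩
  | mul x y _ _ hx hy =>
    obtain ⟨i, j, rfl⟩ := hx
    obtain ⟨i', j', rfl⟩ := hy
    refine ⟨i + i', j + j', ?_⟩
    have := (hab.zpow_zpow i' j).eq
    rw [zpow_add, zpow_add, mul_assoc, ← mul_assoc (b ^ j), ← this]
    group
  | inv x _ hx =>
    obtain ⟨i, j, rfl⟩ := hx
    refine ⟨-i, -j, ?_⟩
    rw [mul_inv_rev, ← zpow_neg, ← zpow_neg]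
    exact (hab.zpow_zpow (-i) (-j)).eq.symm

theorem closure_quot {G : Type*} [Group G] {a b : G} (hcl : Subgroup.closure {a, b} = ⊤)
    (N : Subgroup G) [N.Normal] : Subgroup.closure {(a : G ⧸ N), (b : G ⧸ N)} = ⊤ := by
  have h := MonoidHom.map_closure (QuotientGroup.mk' N) {a, b}
  rw [hcl, Set.image_pair, ← MonoidHom.range_eq_map,
    MonoidHom.range_eq_top.2 (QuotientGroup.mk'_surjective N)] at h
  exact h.symm

theorem normal_of_le_center {G : Type*} [Group G] (N : Subgroup G)
    (h : N ≤ Subgroup.center G) : N.Normal := by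
  refine ⟨fun n hn g => ?_⟩
  rw [Subgroup.mem_center_iff.1 (h hn) g, mul_inv_cancel_right]; exact hn

theorem nf_class2 {G : Type*} [Group G] {a b c : G} (hcl : Subgroup.closure {a, b} = ⊤)
    (hc : c ∈ Subgroup.center G) (hab : a * b = b * a * c) (g : G) :
    ∃ i j k : ℤ, g = a ^ i * b ^ j * c ^ k := by
  have : (Subgroup.zpowers c).Normal := normal_of_le_center _ (by
    rw [Subgroup.zpowers_le]; exact hc)
  obtain ⟨i, j, h⟩ := nf_comm (closure_quot hcl (Subgroup.zpowers c)) (by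
    change (a : G ⧸ Subgroup.zpowers c) * b = b * a
    rw [← QuotientGroup.mk_mul, hab, QuotientGroup.mk_mul_of_mem _ (Subgroup.mem_zpowers c),
      QuotientGroup.mk_mul]) (g : G ⧸ Subgroup.zpowers c)
  rw [← QuotientGroup.mk_zpow, ← QuotientGroup.mk_zpow, ← QuotientGroup.mk_mul, eq_comm,
    QuotientGroup.eq] at h
  obtain ⟨k, hk⟩ := Subgroup.mem_zpowers_iff.1 h
  exact ⟨i, j, k, by rw [hk]; group⟩

/-- Normal form. -/
theorem KRel.normal_form {G : Type*} [Group G] {q : ℕ} (hq : Odd q) {l : ℤ} {a b : G}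
    (h : KRel q l a b) (hcl : Subgroup.closure {a, b} = ⊤) (g : G) :
    ∃ i j k : ℤ, g = a ^ i * b ^ j * (a⁻¹ * b⁻¹ * a * b) ^ k := by
  have hza := h.center_a hq hcl
  have hzb := h.center_b hq hcl
  have hca := h.ca
  have hcb := h.symm.ca
  rw [show b⁻¹ * a⁻¹ * b * a = (a⁻¹ * b⁻¹ * a * b)⁻¹ by group] at hcb
  have hab : a * b = b * a * (a⁻¹ * b⁻¹ * a * b) := by group
  generalize a⁻¹ * b⁻¹ * a * b = c at *
  set N : Subgroup G := Subgroup.closure {a ^ q, b ^ q} with hN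
  have hNZ : N ≤ Subgroup.center G := by
    rw [hN, Subgroup.closure_le]
    rintro x (rfl | rfl)
    · exact hza
    · exact hzb
  have hNn : N.Normal := normal_of_le_center _ hNZ
  have hA : a ^ q ∈ N := Subgroup.subset_closure (by simp)
  have hB : b ^ q ∈ N := Subgroup.subset_closure (by simp)
  have hclN := closure_quot hcl N
  have e1 : (c : G ⧸ N) * a = a * c := by
    rw [← QuotientGroup.mk_mul, hca, QuotientGroup.mk_mul_of_mem _ (N.zpow_mem hA _),
      QuotientGroup.mk_mul]
  have e2 : (c : G ⧸ N)⁻¹ * b = b * (c : G ⧸ N)⁻¹ := by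
    rw [← QuotientGroup.mk_inv, ← QuotientGroup.mk_mul, hcb,
      QuotientGroup.mk_mul_of_mem _ (N.zpow_mem hB _), QuotientGroup.mk_mul]
  have hcc : (c : G ⧸ N) ∈ Subgroup.center (G ⧸ N) :=
    mem_center_of_comm hclN e1 (by
      have : Commute (c : G ⧸ N)⁻¹ b := e2
      simpa using this.inv_left)
  obtain ⟨i, j, k, hg⟩ := nf_class2 hclN hcc (by
    rw [← QuotientGroup.mk_mul, hab, QuotientGroup.mk_mul, QuotientGroup.mk_mul]) (g : G ⧸ N)
  rw [← QuotientGroup.mk_zpow, ← QuotientGroup.mk_zpow, ← QuotientGroup.mk_zpow,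
    ← QuotientGroup.mk_mul, ← QuotientGroup.mk_mul, eq_comm, QuotientGroup.eq] at hg
  have hgz : ∃ s t : ℤ, (a ^ i * b ^ j * c ^ k)⁻¹ * g = (a ^ q) ^ s * (b ^ q) ^ t := by
    have hcom : Commute (a ^ q) (b ^ q) := (Subgroup.mem_center_iff.1 hza (b ^ q)).symm
    generalize (a ^ i * b ^ j * c ^ k)⁻¹ * g = w at hg
    induction hg using Subgroup.closure_induction with
    | mem x hx =>
      rcases hx with rfl | rfl
      · exact ⟨1, 0, by simp⟩
      · exact ⟨0, 1, by simp⟩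
    | one => exact ⟨0, 0, by simp⟩
    | mul x y _ _ hx hy =>
      obtain ⟨i, j, rfl⟩ := hx
      obtain ⟨i', j', rfl⟩ := hy
      refine ⟨i + i', j + j', ?_⟩
      have := (hcom.zpow_zpow i' j).eq
      rw [zpow_add, zpow_add, mul_assoc, ← mul_assoc ((b ^ q) ^ j), ← this]
      simp only [mul_assoc]
    | inv x _ hx =>
      obtain ⟨i, j, rfl⟩ := hx
      refine ⟨-i, -j, ?_⟩
      rw [mul_inv_rev, ← zpow_neg, ← zpow_neg]
      exact (hcom.zpow_zpow (-i) (-j)).eq.symm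
  obtain ⟨s, t, hst⟩ := hgz
  have hg' : g = (a ^ i * b ^ j * c ^ k) * ((a ^ q) ^ s * (b ^ q) ^ t) := by
    rw [← hst]; group
  refine ⟨i + q * s, j + q * t, k, ?_⟩
  have ca : ∀ x : G, x * (a ^ q) ^ s = (a ^ q) ^ s * x :=
    Subgroup.mem_center_iff.1 (Subgroup.zpow_mem _ hza s)
  have cb : ∀ x : G, x * (b ^ q) ^ t = (b ^ q) ^ t * x :=
    Subgroup.mem_center_iff.1 (Subgroup.zpow_mem _ hzb t)
  rw [hg', zpow_add, zpow_add, zpow_mul, zpow_mul, zpow_natCast, zpow_natCast, ← mul_assoc,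
    ca, mul_assoc ((a ^ q) ^ s), mul_assoc (a ^ i * b ^ j), cb, ca (a ^ i)]
  simp only [mul_assoc]

/-! ### The model -/

/-- The model group of order `q^4`. -/
@[ext]
structure MM (q : ℕ) (l : ℤ) where
  X : ZMod (q ^ 2)
  Y : ZMod (q ^ 2)
  i : ZMod (q ^ 2)
  hX : ∃ x, X = q * x
  hY : ∃ y, Y = q * y

namespace MM

variable {q : ℕ} {l : ℤ}

theorem eps_sq : (q : ZMod (q ^ 2)) * q = 0 := by
  have := ZMod.natCast_self (q ^ 2)
  push_cast at this
  rw [← sq]; exact this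

/-- one half -/
def hf (q : ℕ) : ZMod (q ^ 2) := ((q ^ 2 + 1) / 2 : ℕ)

theorem two_hf (hq : Odd q) : 2 * hf q = 1 := by
  have h2 : Even (q ^ 2 + 1) := hq.pow.add_one
  have : 2 * ((q ^ 2 + 1) / 2) = q ^ 2 + 1 := Nat.mul_div_cancel' h2.two_dvd
  have h3 := congrArg (Nat.cast : ℕ → ZMod (q ^ 2)) this
  push_cast at h3
  have h4 := ZMod.natCast_self (q ^ 2)
  push_cast at h4
  rw [h4, zero_add] at h3
  unfold hf
  exact h3

instance : Mul (MM q l) := ⟨fun g h =>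
  { X := g.X + h.X
    Y := g.Y + h.Y + g.i * h.X
    i := g.i + h.i + l * (g.i * h.Y + h.X * g.i * (g.i + 1) * hf q)
    hX := by
      obtain ⟨x, hx⟩ := g.hX
      obtain ⟨y, hy⟩ := h.hX
      exact ⟨x + y, by rw [hx, hy]; ring⟩
    hY := by
      obtain ⟨x, hx⟩ := g.hY
      obtain ⟨y, hy⟩ := h.hY
      obtain ⟨z, hz⟩ := h.hX
      exact ⟨x + y + g.i * z, by rw [hx, hy, hz]; ring⟩ }⟩

instance : One (MM q l) := ⟨⟨0, 0, 0, ⟨0, by simp⟩, ⟨0, by simp⟩⟩⟩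

instance : Inv (MM q l) := ⟨fun g =>
  { X := - g.X
    Y := - g.Y + g.i * g.X
    i := - g.i + l * (g.i * g.Y + g.X * g.i * (1 - g.i) * hf q)
    hX := by
      obtain ⟨x, hx⟩ := g.hX
      exact ⟨-x, by rw [hx]; ring⟩
    hY := by
      obtain ⟨x, hx⟩ := g.hY
      obtain ⟨z, hz⟩ := g.hX
      exact ⟨-x + g.i * z, by rw [hx, hz]; ring⟩ }⟩

@[simp] theorem mul_X (g h : MM q l) : (g * h).X = g.X + h.X := rfl
@[simp] theorem mul_Y (g h : MM q l) : (g * h).Y = g.Y + h.Y + g.i * h.X := rfl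
@[simp] theorem mul_i (g h : MM q l) :
    (g * h).i = g.i + h.i + l * (g.i * h.Y + h.X * g.i * (g.i + 1) * hf q) := rfl
@[simp] theorem one_X : (1 : MM q l).X = 0 := rfl
@[simp] theorem one_Y : (1 : MM q l).Y = 0 := rfl
@[simp] theorem one_i : (1 : MM q l).i = 0 := rfl
@[simp] theorem inv_X (g : MM q l) : (g⁻¹).X = - g.X := rfl
@[simp] theorem inv_Y (g : MM q l) : (g⁻¹).Y = - g.Y + g.i * g.X := rfl
@[simp] theorem inv_i (g : MM q l) :
    (g⁻¹).i = - g.i + l * (g.i * g.Y + g.X * g.i * (1 - g.i) * hf q) := rfl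

theorem assoc_aux (hq : Odd q) (g h k : MM q l) : g * h * k = g * (h * k) := by
  have h2 := two_hf hq
  have he := eps_sq (q := q)
  obtain ⟨X, Y, i, ⟨x, rfl⟩, ⟨y, rfl⟩⟩ := g
  obtain ⟨X', Y', i', ⟨x', rfl⟩, ⟨y', rfl⟩⟩ := h
  obtain ⟨X'', Y'', i'', ⟨x'', rfl⟩, ⟨y'', rfl⟩⟩ := k
  ext
  · simp; ring
  · simp only [mul_X, mul_Y, mul_i]
    generalize hf q = h at *
    generalize (q : ZMod (q ^ 2)) = e at *
    generalize (l : ZMod (q ^ 2)) = l at *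
    clear * - he h2
    grind
  · simp only [mul_X, mul_Y, mul_i]
    generalize hf q = h at *
    generalize (q : ZMod (q ^ 2)) = e at *
    generalize (l : ZMod (q ^ 2)) = l at *
    clear * - he h2
    grind

theorem inv_aux (hq : Odd q) (g : MM q l) : g⁻¹ * g = 1 := by
  have h2 := two_hf hq
  have he := eps_sq (q := q)
  obtain ⟨X, Y, i, ⟨x, rfl⟩, ⟨y, rfl⟩⟩ := g
  ext
  · simp
  · simp only [mul_X, mul_Y, mul_i, inv_X, inv_Y, inv_i, one_Y]
    generalize hf q = h at *
    generalize (q : ZMod (q ^ 2)) = e at *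
    generalize (l : ZMod (q ^ 2)) = l at *
    clear * - he h2
    grind
  · simp only [mul_X, mul_Y, mul_i, inv_X, inv_Y, inv_i, one_i]
    generalize hf q = h at *
    generalize (q : ZMod (q ^ 2)) = e at *
    generalize (l : ZMod (q ^ 2)) = l at *
    clear * - he h2
    grind

instance [hq : Fact (Odd q)] : Group (MM q l) :=
  Group.ofLeftAxioms (assoc_aux hq.out) (fun g => by ext <;> simp) (inv_aux hq.out)

/-- powers of `a` -/
def gA (n : ZMod (q ^ 2)) : MM q l := ⟨0, 0, n, ⟨0, by simp⟩, ⟨0, by simp⟩⟩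
/-- powers of `b` -/
def gB (n : ZMod (q ^ 2)) : MM q l := ⟨q * n, 0, 0, ⟨n, rfl⟩, ⟨0, by simp⟩⟩
/-- powers of `c` -/
def gC (n : ZMod (q ^ 2)) : MM q l := ⟨0, q * n, 0, ⟨0, by simp⟩, ⟨n, rfl⟩⟩

variable [hq : Fact (Odd q)]

theorem zpow_aux (f : ZMod (q ^ 2) → MM q l) (h0 : f 0 = 1) (h : ∀ x y, f (x + y) = f x * f y)
    (n : ℤ) : f 1 ^ n = f n := by
  let F : Multiplicative (ZMod (q ^ 2)) →* MM q l :=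
    { toFun := fun x => f x.toAdd, map_one' := h0, map_mul' := fun x y => h _ _ }
  have := map_zpow F (Multiplicative.ofAdd 1) n
  rw [← ofAdd_zsmul] at this
  simpa [F] using this.symm

theorem gA_zpow (n : ℤ) : (gA 1 : MM q l) ^ n = gA n :=
  zpow_aux _ rfl (fun x y => by ext <;> simp [gA]) n
theorem gB_zpow (n : ℤ) : (gB 1 : MM q l) ^ n = gB n :=
  zpow_aux _ (by ext <;> simp [gB]) (fun x y => by ext <;> simp [gB, mul_add]) n
theorem gC_zpow (n : ℤ) : (gC 1 : MM q l) ^ n = gC n :=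
  zpow_aux _ (by ext <;> simp [gC]) (fun x y => by ext <;> simp [gC, mul_add]) n

theorem comm_ab : (gA 1 : MM q l)⁻¹ * (gB 1)⁻¹ * gA 1 * gB 1 = gC 1 := by
  have : (gA 1 : MM q l) * gB 1 = gB 1 * gA 1 * gC 1 := by
    have h2 := two_hf hq.out
    ext
    · simp [gA, gB, gC]
    · simp [gA, gB, gC]
    · simp [gA, gB, gC]
      linear_combination (l : ZMod (q ^ 2)) * (q : ZMod (q ^ 2)) * h2
  rw [mul_assoc, this]; group

theorem krel : KRel q l (gA 1 : MM q l) (gB 1) := by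
  have he := eps_sq (q := q)
  have hs : ((q ^ 2 : ℕ) : ZMod (q ^ 2)) = 0 := ZMod.natCast_self _
  refine ⟨?_, ?_, ?_, ?_, ?_⟩
  · rw [comm_ab, gA_zpow]
    have : (gA 1 : MM q l) * gC 1 = gC 1 * gA ((1 + q * l : ℤ) : ZMod (q ^ 2)) := by
      ext
      · simp [gA, gC]
      · simp [gA, gC]
      · simp [gA, gC]; ring
    rw [mul_assoc, this]; group
  · rw [comm_ab, gB_zpow]
    have : (gC 1 : MM q l) * gB 1 = gB ((1 + q * l : ℤ) : ZMod (q ^ 2)) * gC 1 := by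
      ext
      · simp [gB, gC]
        linear_combination -(l : ZMod (q ^ 2)) * he
      · simp [gB, gC]
      · simp [gB, gC]
    rw [this]; group
  · rw [← zpow_natCast, gA_zpow, Int.cast_natCast, hs]; rfl
  · rw [← zpow_natCast, gB_zpow, Int.cast_natCast, hs]; ext <;> simp [gB]
  · rw [comm_ab, ← zpow_natCast, gC_zpow, Int.cast_natCast]
    ext <;> simp [gC, he]

theorem eps_dvd {n : ℤ} (h : (q : ZMod (q ^ 2)) * n = 0) : (q : ℤ) ∣ n := by
  have h' : ((q * n : ℤ) : ZMod (q ^ 2)) = 0 := by push_cast; exact h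
  rw [ZMod.intCast_zmod_eq_zero_iff_dvd] at h'
  have hq0 : (q : ℤ) ≠ 0 := by
    have := hq.out.pos
    omega
  push_cast at h'
  rw [sq] at h'
  exact Int.dvd_of_mul_dvd_mul_left hq0 h'

end MM

theorem prod_Y {q : ℕ} [hq : Fact (Odd q)] {l : ℤ} (i j k : ℤ) :
    ((MM.gA 1 : MM q l) ^ i * MM.gB 1 ^ j * MM.gC 1 ^ k).X = (q : ZMod (q ^ 2)) * (j : ZMod (q ^ 2)) ∧
    ((MM.gA 1 : MM q l) ^ i * MM.gB 1 ^ j * MM.gC 1 ^ k).Y =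
      (q : ZMod (q ^ 2)) * (k : ZMod (q ^ 2)) + (i : ZMod (q ^ 2)) * (q * j) := by
  rw [MM.gA_zpow, MM.gB_zpow, MM.gC_zpow]
  constructor
  · simp [MM.gA, MM.gB, MM.gC]
  · simp [MM.gA, MM.gB, MM.gC]; ring

theorem prod_X' {q : ℕ} [hq : Fact (Odd q)] {l : ℤ} (i j k : ℤ) :
    ((MM.gB 1 : MM q l) ^ i * MM.gA 1 ^ j * (MM.gC 1)⁻¹ ^ k).X = (q : ZMod (q ^ 2)) * (i : ZMod (q ^ 2)) := by
  rw [inv_zpow', MM.gA_zpow, MM.gB_zpow, MM.gC_zpow]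
  simp [MM.gA, MM.gB, MM.gC]

/-- Commutation with `a` modulo elements with `X = Y = 0`. -/
theorem MM.comm_X {q : ℕ} [hq : Fact (Odd q)] {l : ℤ} (g z : MM q l)
    (hY : z.Y = 0) (hi : ∃ s, z.i = q * s)
    (h : g * MM.gA 1 = z * (MM.gA 1 * g)) : g.X = 0 := by
  obtain ⟨s, hs⟩ := hi
  have he := MM.eps_sq (q := q)
  obtain ⟨x, hx⟩ := g.hX
  have h1 := congrArg MM.Y h
  simp [MM.gA, hY, hs, hx] at h1
  rw [hx]
  linear_combination -h1 - s * x * he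

theorem MM.comm_Y {q : ℕ} [hq : Fact (Odd q)] {l : ℤ} (g : MM q l)
    (h : g * MM.gA 1 = MM.gA 1 * g) : g.X = 0 ∧ l * g.Y = 0 := by
  have h0 : g.X = 0 := MM.comm_X g 1 rfl ⟨0, by simp⟩ (by rw [h, one_mul])
  have h1 := congrArg MM.i h
  simp [MM.gA, h0] at h1
  refine ⟨h0, ?_⟩
  linear_combination -h1

/-- The data we have about `K`. -/
structure KData {G : Type*} [Group G] (q : ℕ) [Fact (Odd q)] (l : ℤ) (a b : G) : Prop where
  rel : KRel q l a b
  cl : Subgroup.closure {a, b} = ⊤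
  cop : IsCoprime l q
  phi1 : ∃ f : G →* MM q l, f a = MM.gA 1 ∧ f b = MM.gB 1
  phi2 : ∃ f : G →* MM q l, f a = MM.gB 1 ∧ f b = MM.gA 1

namespace KData

variable {G : Type*} [Group G] {q : ℕ} [hq : Fact (Odd q)] {l : ℤ} {a b : G}

theorem symm (h : KData q l a b) : KData q l b a := by
  obtain ⟨f1, h1, h2⟩ := h.phi1
  obtain ⟨f2, h3, h4⟩ := h.phi2
  exact ⟨h.rel.symm, by rw [Set.pair_comm]; exact h.cl, h.cop, ⟨f2, h4, h3⟩, ⟨f1, h2, h1⟩⟩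

theorem f_c {f : G →* MM q l} (h1 : f a = MM.gA 1) (h2 : f b = MM.gB 1) :
    f (a⁻¹ * b⁻¹ * a * b) = MM.gC 1 := by
  rw [← MM.comm_ab]; simp [h1, h2]

theorem f_c' {f : G →* MM q l} (h1 : f a = MM.gB 1) (h2 : f b = MM.gA 1) :
    f (a⁻¹ * b⁻¹ * a * b) = (MM.gC 1)⁻¹ := by
  rw [← MM.comm_ab]; simp [h1, h2, mul_assoc]

/-- Pack exponents divisible by `q`. -/
theorem pack {i j : ℤ} (hi : (q : ℤ) ∣ i) (hj : (q : ℤ) ∣ j) :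
    ∃ s t : ℤ, a ^ i * b ^ j = (a ^ q) ^ s * (b ^ q) ^ t := by
  obtain ⟨s, rfl⟩ := hi
  obtain ⟨t, rfl⟩ := hj
  exact ⟨s, t, by rw [zpow_mul, zpow_mul, zpow_natCast, zpow_natCast]⟩

theorem dvd_i (h : KData q l a b) {i j k : ℤ} (f : G →* MM q l)
    (h1 : f a = MM.gB 1) (h2 : f b = MM.gA 1)
    (hg : (f (a ^ i * b ^ j * (a⁻¹ * b⁻¹ * a * b) ^ k)).X = 0) : (q : ℤ) ∣ i := by
  have _ := h
  rw [map_mul, map_mul, map_zpow, map_zpow, map_zpow, f_c' h1 h2, h1, h2, prod_X'] at hg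
  exact MM.eps_dvd hg

theorem dvd_j (h : KData q l a b) {i j k : ℤ} (f : G →* MM q l)
    (h1 : f a = MM.gA 1) (h2 : f b = MM.gB 1)
    (hg : (f (a ^ i * b ^ j * (a⁻¹ * b⁻¹ * a * b) ^ k)).X = 0) : (q : ℤ) ∣ j := by
  have _ := h
  rw [map_mul, map_mul, map_zpow, map_zpow, map_zpow, f_c h1 h2, h1, h2, (prod_Y _ _ _).1] at hg
  exact MM.eps_dvd hg

theorem center_form (h : KData q l a b) {g : G} (hg : g ∈ Subgroup.center G) :
    ∃ s t : ℤ, g = (a ^ q) ^ s * (b ^ q) ^ t := by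
  have hcom := Subgroup.mem_center_iff.1 hg
  obtain ⟨i, j, k, rfl⟩ := h.rel.normal_form hq.out h.cl g
  obtain ⟨f1, h1, h2⟩ := h.phi1
  obtain ⟨f2, h3, h4⟩ := h.phi2
  have e1 := congrArg f1 (hcom a)
  have e2 := congrArg f2 (hcom b)
  rw [map_mul, map_mul f1 _ a, h1] at e1
  rw [map_mul, map_mul f2 _ b, h4] at e2
  obtain ⟨x1, y1⟩ := MM.comm_Y _ e1.symm
  obtain ⟨x2, -⟩ := MM.comm_Y _ e2.symm
  have hi := h.dvd_i f2 h3 h4 x2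
  have hj := h.dvd_j f1 h1 h2 x1
  have hk : (q : ℤ) ∣ k := by
    rw [map_mul, map_mul, map_zpow, map_zpow, map_zpow, f_c h1 h2, h1, h2] at x1 y1
    rw [(prod_Y _ _ _).1] at x1
    rw [(prod_Y _ _ _).2, x1] at y1
    have : (q : ZMod (q ^ 2)) * ((l * k : ℤ) : ZMod (q ^ 2)) = 0 := by
      push_cast
      linear_combination y1
    exact (h.cop.symm).dvd_of_dvd_mul_left (MM.eps_dvd this)
  obtain ⟨r, rfl⟩ := hk
  rw [zpow_mul, zpow_natCast, h.rel.h5, one_zpow, mul_one]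
  exact pack hi hj

theorem f_center (f : G →* MM q l) (h1 : f a = MM.gA 1) (h2 : f b = MM.gB 1) (s t : ℤ) :
    f ((a ^ q) ^ s * (b ^ q) ^ t) = MM.gA (q * s) := by
  rw [map_mul, map_zpow, map_zpow, map_pow, map_pow, h1, h2, ← zpow_natCast, ← zpow_mul,
    ← zpow_natCast, ← zpow_mul, MM.gA_zpow, MM.gB_zpow]
  have he := MM.eps_sq (q := q)
  have : (q : ZMod (q ^ 2)) * (q * t) = 0 := by rw [← mul_assoc, he, zero_mul]
  ext <;> simp [MM.gA, MM.gB, this]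

theorem X_zero (h : KData q l a b) {g : G} (hg : g * a * g⁻¹ * a⁻¹ ∈ Subgroup.center G)
    (f : G →* MM q l) (h1 : f a = MM.gA 1) (h2 : f b = MM.gB 1) : (f g).X = 0 := by
  obtain ⟨s, t, hz⟩ := h.center_form hg
  have e : g * a = ((a ^ q) ^ s * (b ^ q) ^ t) * (a * g) := by rw [← hz]; group
  have e1 := congrArg f e
  rw [map_mul, map_mul f _ (a * g), map_mul f a g, f_center f h1 h2, h1] at e1
  exact MM.comm_X _ _ rfl ⟨s, rfl⟩ e1

theorem Z2_form (h : KData q l a b) {g : G}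
    (hg : ∀ y, g * y * g⁻¹ * y⁻¹ ∈ Subgroup.center G) :
    ∃ s t k : ℤ, g = (a ^ q) ^ s * (b ^ q) ^ t * (a⁻¹ * b⁻¹ * a * b) ^ k := by
  obtain ⟨f1, h1, h2⟩ := h.phi1
  obtain ⟨f2, h3, h4⟩ := h.phi2
  have x1 := h.X_zero (hg a) f1 h1 h2
  have x2 := h.symm.X_zero (hg b) f2 h4 h3
  obtain ⟨i, j, k, rfl⟩ := h.rel.normal_form hq.out h.cl g
  obtain ⟨s, t, e⟩ := pack (a := a) (b := b) (h.dvd_i f2 h3 h4 x2) (h.dvd_j f1 h1 h2 x1)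
  exact ⟨s, t, k, by rw [e]⟩

theorem za (h : KData q l a b) : a ^ q ∈ Subgroup.center G := h.rel.center_a hq.out h.cl
theorem zb (h : KData q l a b) : b ^ q ∈ Subgroup.center G := h.rel.center_b hq.out h.cl

theorem center_pow (h : KData q l a b) {g : G} (hg : g ∈ Subgroup.center G) : g ^ q = 1 := by
  obtain ⟨s, t, rfl⟩ := h.center_form hg
  have hc : Commute ((a ^ q) ^ s) ((b ^ q) ^ t) :=
    ((Subgroup.mem_center_iff.1 (Subgroup.zpow_mem _ h.za s)) _).symm
  rw [hc.mul_pow, ← zpow_natCast, ← zpow_mul, mul_comm, zpow_mul, zpow_natCast,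
    ← zpow_natCast ((b ^ q) ^ t), ← zpow_mul, mul_comm t, zpow_mul, zpow_natCast, ← pow_mul,
    ← pow_mul, ← sq, h.rel.h3, h.rel.h4]
  simp

theorem card_center (h : KData q l a b) : Nat.card (Subgroup.center G) = q ^ 2 := by
  have hq0 : 0 < q := hq.out.pos
  have : NeZero q := ⟨hq0.ne'⟩
  let F : Fin q × Fin q → Subgroup.center G := fun x =>
    ⟨(a ^ q) ^ (x.1 : ℕ) * (b ^ q) ^ (x.2 : ℕ),
      Subgroup.mul_mem _ (Subgroup.pow_mem _ h.za _) (Subgroup.pow_mem _ h.zb _)⟩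
  have hF : Function.Bijective F := by
    constructor
    · rintro ⟨s, t⟩ ⟨s', t'⟩ e
      have e' : (a ^ q) ^ (s : ℕ) * (b ^ q) ^ (t : ℕ) =
        (a ^ q) ^ (s' : ℕ) * (b ^ q) ^ (t' : ℕ) := congrArg Subtype.val e
      have key : ∀ {a b : G}, KData q l a b → ∀ s t s' t' : Fin q,
          (a ^ q) ^ (s : ℕ) * (b ^ q) ^ (t : ℕ) = (a ^ q) ^ (s' : ℕ) * (b ^ q) ^ (t' : ℕ) →
          s = s' := by
        intro a b h s t s' t' e
        obtain ⟨f, h1, h2⟩ := h.phi1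
        have e1 := congrArg f e
        have e2 := f_center f h1 h2 (s : ℕ) (t : ℕ)
        have e3 := f_center f h1 h2 (s' : ℕ) (t' : ℕ)
        rw [zpow_natCast, zpow_natCast] at e2 e3
        rw [e2, e3] at e1
        have e4 := congrArg MM.i e1
        have e5 : (q : ZMod (q ^ 2)) * (((s : ℕ) - (s' : ℕ) : ℤ) : ZMod (q ^ 2)) = 0 := by
          simp only [MM.gA] at e4
          push_cast at e4 ⊢
          linear_combination e4
        have e6 := MM.eps_dvd e5
        have e7 := Int.eq_zero_of_abs_lt_dvd e6 (by
          have := s.2; have := s'.2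
          rw [abs_lt]; omega)
        ext; omega
      have k1 := key h s t s' t' e'
      have comm : ∀ s t : ℕ, (a ^ q) ^ s * (b ^ q) ^ t = (b ^ q) ^ t * (a ^ q) ^ s := fun s t =>
        ((Subgroup.mem_center_iff.1 (Subgroup.pow_mem _ h.za s)) _).symm
      rw [comm, comm] at e'
      have k2 := key h.symm t s t' s' e'
      rw [k1, k2]
    · rintro ⟨g, hg⟩
      obtain ⟨s, t, rfl⟩ := h.center_form hg
      have red : ∀ z : G, z ^ q = 1 → ∀ s : ℤ, ∃ n : Fin q, z ^ (n : ℕ) = z ^ s := by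
        intro z hz s
        have hs0 : 0 ≤ s % q := Int.emod_nonneg _ (by omega)
        have hs1 : s % q < q := Int.emod_lt_of_pos _ (by omega)
        refine ⟨⟨(s % q).toNat, by omega⟩, ?_⟩
        rw [← zpow_natCast]
        simp only [Int.toNat_of_nonneg hs0]
        conv_rhs => rw [← Int.emod_add_mul_ediv s q, zpow_add, zpow_mul, zpow_natCast z q, hz]
        simp
      obtain ⟨n, hn⟩ := red _ (h.center_pow h.za) s
      obtain ⟨n', hn'⟩ := red _ (h.center_pow h.zb) t
      exact ⟨(n, n'), Subtype.ext (by simp only [F]; rw [hn, hn'])⟩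
  rw [← Nat.card_eq_of_bijective F hF]
  simp [sq]

/-- The relations hold for `a u`, `b v`. -/
theorem rel_mul (h : KData q l a b) {u v : G} (hu : u ∈ Subgroup.center G)
    (hv : v ∈ Subgroup.center G) :
    KRel q l (a * u) (b * v) ∧
      (a * u)⁻¹ * (b * v)⁻¹ * (a * u) * (b * v) = a⁻¹ * b⁻¹ * a * b := by
  have cu : ∀ x, x * u = u * x := Subgroup.mem_center_iff.1 hu
  have cv : ∀ x, x * v = v * x := Subgroup.mem_center_iff.1 hv
  have e : (a * u)⁻¹ * (b * v)⁻¹ * (a * u) * (b * v) = a⁻¹ * b⁻¹ * a * b := by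
    rw [cu a, cv b, mul_inv_rev, mul_inv_rev]
    calc a⁻¹ * u⁻¹ * (b⁻¹ * v⁻¹) * (u * a) * (v * b)
        = a⁻¹ * u⁻¹ * b⁻¹ * v⁻¹ * u * (a * v) * b := by group
      _ = a⁻¹ * u⁻¹ * b⁻¹ * v⁻¹ * ((u * v) * a) * b := by rw [cv a]; group
      _ = a⁻¹ * (u⁻¹ * (b⁻¹ * u)) * a * b := by rw [cv u]; group
      _ = _ := by rw [cu]; group
  have pz : ∀ {x z : G}, z ∈ Subgroup.center G → (x * z) ^ (1 + q * l) = x ^ (1 + q * l) * z := by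
    intro x z hz
    have hc : Commute x z := Subgroup.mem_center_iff.1 hz x
    rw [hc.mul_zpow, zpow_add z, zpow_mul, zpow_natCast, h.center_pow hz]
    simp
  have pq : ∀ {x z : G}, z ∈ Subgroup.center G → (x * z) ^ (q ^ 2) = x ^ (q ^ 2) := by
    intro x z hz
    have hc : Commute x z := Subgroup.mem_center_iff.1 hz x
    rw [hc.mul_pow, sq, pow_mul z, h.center_pow hz]
    simp
  refine ⟨⟨?_, ?_, ?_, ?_, ?_⟩, e⟩
  · rw [e, pz hu, ← h.rel.h1, mul_assoc _ _ u, cu (a⁻¹ * b⁻¹ * a * b)]; group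
  · rw [e, pz hv, ← h.rel.h2, mul_assoc _ _ v, cv ((a⁻¹ * b⁻¹ * a * b)⁻¹)]; group
  · rw [pq hu, h.rel.h3]
  · rw [pq hv, h.rel.h4]
  · rw [e, h.rel.h5]

/-- Fixing `Z_2`. -/
theorem fix_Z2 (h : KData q l a b) {u v : G} (hu : u ∈ Subgroup.center G)
    (hv : v ∈ Subgroup.center G) (f : G →* G) (h1 : f a = a * u) (h2 : f b = b * v) {g : G}
    (hg : ∀ y, g * y * g⁻¹ * y⁻¹ ∈ Subgroup.center G) : f g = g := by
  obtain ⟨s, t, k, rfl⟩ := h.Z2_form hg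
  have e := (h.rel_mul hu hv).2
  have pq : ∀ {x z : G}, z ∈ Subgroup.center G → (x * z) ^ q = x ^ q := by
    intro x z hz
    have hc : Commute x z := Subgroup.mem_center_iff.1 hz x
    rw [hc.mul_pow, h.center_pow hz, mul_one]
  have e' : f (a⁻¹ * b⁻¹ * a * b) = a⁻¹ * b⁻¹ * a * b := by
    rw [map_mul, map_mul, map_mul, map_inv, map_inv, h1, h2, e]
  rw [map_mul, map_mul, map_zpow, map_zpow, map_zpow, e', map_pow, map_pow, h1, h2, pq hu, pq hv]

theorem fix_Z (h : KData q l a b) {u v : G} (hu : u ∈ Subgroup.center G)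
    (hv : v ∈ Subgroup.center G) (f : G →* G) (h1 : f a = a * u) (h2 : f b = b * v) {g : G}
    (hg : g ∈ Subgroup.center G) : f g = g := by
  refine h.fix_Z2 hu hv f h1 h2 fun y => ?_
  rw [← Subgroup.mem_center_iff.1 hg y]
  simp

end KData

theorem KGroup.hom_exists {p m : ℕ} {α l : ℤ} (hl : α = 1 + (p ^ m : ℕ) * l)
    {G : Type*} [Group G] {A B : G} (h : KRel (p ^ m) l A B) :
    ∃ f : KGroup p m α →* G, f (PresentedGroup.of 0) = A ∧ f (PresentedGroup.of 1) = B := by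
  have hr : ∀ r ∈ kRels p m α, FreeGroup.lift ![A, B] r = 1 := by
    have e2 : p ^ (2 * m) = (p ^ m) ^ 2 := by rw [← pow_mul, mul_comm]
    intro r hr
    simp only [kRels, Set.mem_insert_iff, Set.mem_singleton_iff] at hr
    rcases hr with rfl | rfl | rfl | rfl | rfl
    · simp only [map_mul, map_inv, map_zpow, FreeGroup.lift_apply_of, Matrix.cons_val_zero,
        Matrix.cons_val_one]
      rw [mul_inv_eq_one, hl]; exact h.h1
    · simp only [map_mul, map_inv, map_zpow, FreeGroup.lift_apply_of, Matrix.cons_val_zero,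
        Matrix.cons_val_one]
      rw [mul_inv_eq_one, hl]; exact h.h2
    · simp only [map_pow, FreeGroup.lift_apply_of, Matrix.cons_val_zero]
      rw [e2]; exact h.h3
    · simp only [map_pow, FreeGroup.lift_apply_of, Matrix.cons_val_one]
      rw [e2]; exact h.h4
    · simp only [map_mul, map_inv, map_pow, FreeGroup.lift_apply_of, Matrix.cons_val_zero,
        Matrix.cons_val_one]
      exact h.h5
  exact ⟨PresentedGroup.toGroup hr, by simp, by simp⟩

theorem KGroup.closure_pair (p m : ℕ) (α : ℤ) :
    Subgroup.closure {(PresentedGroup.of 0 : KGroup p m α), PresentedGroup.of 1} = ⊤ := by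
  rw [← PresentedGroup.closure_range_of (kRels p m α)]
  congr 1
  ext x
  simp [Fin.exists_fin_two, eq_comm]

theorem krel_of_hom {p m : ℕ} {α l : ℤ} (hl : α = 1 + (p ^ m : ℕ) * l) {H : Type*} [Group H]
    (F : FreeGroup (Fin 2) →* H) (key : ∀ r ∈ kRels p m α, F r = 1) :
    KRel (p ^ m) l (F (FreeGroup.of 0)) (F (FreeGroup.of 1)) := by
  have e2 : p ^ (2 * m) = (p ^ m) ^ 2 := by rw [← pow_mul, mul_comm]
  simp only [kRels, Set.mem_insert_iff, Set.mem_singleton_iff, forall_eq_or_imp, forall_eq] at key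
  obtain ⟨k1, k2, k3, k4, k5⟩ := key
  refine ⟨?_, ?_, ?_, ?_, ?_⟩
  · rw [map_mul, map_inv, mul_inv_eq_one] at k1
    rw [← hl]; simpa using k1
  · rw [map_mul, map_inv, mul_inv_eq_one] at k2
    rw [← hl]; simpa using k2
  · rw [← e2]; simpa using k3
  · rw [← e2]; simpa using k4
  · simpa using k5

theorem KGroup.krel {p m : ℕ} {α l : ℤ} (hl : α = 1 + (p ^ m : ℕ) * l) :
    KRel (p ^ m) l (PresentedGroup.of 0 : KGroup p m α) (PresentedGroup.of 1) :=
  krel_of_hom hl (PresentedGroup.mk (kRels p m α)) fun _ hr => PresentedGroup.one_of_mem hr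

theorem hom_ext_pair {G H : Type*} [Group G] [Group H] {a b : G}
    (hcl : Subgroup.closure {a, b} = ⊤) {f g : G →* H} (h1 : f a = g a) (h2 : f b = g b) :
    f = g :=
  MonoidHom.eq_of_eqOn_dense hcl (by rintro x (rfl | rfl) <;> assumption)

theorem KGroup_central_automorphisms (p m : ℕ) (hp : p.Prime) (hodd : Odd p) (hm : 1 ≤ m)
    (α : ℤ) (hα : vCond p m α) (hα' : specialCond p m α) :
    ∃ Ω : (Subgroup.center (KGroup p m α)) × (Subgroup.center (KGroup p m α)) →*
        MulAut (KGroup p m α),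
      Function.Injective Ω ∧
      Ω.range = autC (KGroup p m α) 1 ∧
      (∀ u v : Subgroup.center (KGroup p m α),
        Ω (u, v) (PresentedGroup.of 0) = (PresentedGroup.of 0 : KGroup p m α) * u ∧
        Ω (u, v) (PresentedGroup.of 1) = (PresentedGroup.of 1 : KGroup p m α) * v ∧
        ∀ z ∈ upperCentralSeries (KGroup p m α) 2, Ω (u, v) z = z) ∧
      Nat.card (autC (KGroup p m α) 1) = p ^ (4 * m) := by
  classical
  obtain ⟨⟨l, hl⟩, hnd⟩ := hα
  have hl' : α = 1 + (p ^ m : ℕ) * l := by push_cast; linarith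
  have hqo : Odd (p ^ m) := hodd.pow
  haveI : Fact (Odd (p ^ m)) := ⟨hqo⟩
  have hcop : IsCoprime l ((p ^ m : ℕ) : ℤ) := by
    push_cast
    refine IsCoprime.pow_right ?_
    rw [isCoprime_comm, Prime.coprime_iff_not_dvd (Nat.prime_iff_prime_int.1 hp)]
    rintro ⟨r, rfl⟩
    exact hnd ⟨r, by rw [hl]; ring⟩
  have hcl := KGroup.closure_pair p m α
  have D : KData (p ^ m) l (PresentedGroup.of 0 : KGroup p m α) (PresentedGroup.of 1) :=
    ⟨KGroup.krel hl', hcl, hcop, KGroup.hom_exists hl' MM.krel, KGroup.hom_exists hl' MM.krel.symm⟩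
  set a : KGroup p m α := PresentedGroup.of 0 with ha
  set b : KGroup p m α := PresentedGroup.of 1 with hb
  have hex : ∀ w : Subgroup.center (KGroup p m α) × Subgroup.center (KGroup p m α),
      ∃ f : KGroup p m α →* KGroup p m α, f a = a * w.1 ∧ f b = b * w.2 := fun w =>
    KGroup.hom_exists hl' (D.rel_mul w.1.2 w.2.2).1
  choose F hFa hFb using hex
  have hFz : ∀ w (z : KGroup p m α), z ∈ Subgroup.center (KGroup p m α) → F w z = z :=
    fun w z hz => D.fix_Z w.1.2 w.2.2 (F w) (hFa w) (hFb w) hz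
  have hFmul : ∀ w w', (F w).comp (F w') = F (w * w') := by
    intro w w'
    apply hom_ext_pair hcl
    · rw [MonoidHom.comp_apply, hFa, map_mul, hFa, hFa, hFz _ _ w'.1.2, mul_assoc]; rfl
    · rw [MonoidHom.comp_apply, hFb, map_mul, hFb, hFb, hFz _ _ w'.2.2, mul_assoc]; rfl
  have hF1 : F 1 = MonoidHom.id _ := by
    apply hom_ext_pair hcl
    · rw [hFa]; simp
    · rw [hFb]; simp
  let Ω : (Subgroup.center (KGroup p m α)) × (Subgroup.center (KGroup p m α)) →*
      MulAut (KGroup p m α) := MonoidHom.mk'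
    (fun w => MonoidHom.toMulEquiv (F w) (F w⁻¹) (by rw [hFmul, inv_mul_cancel, hF1])
      (by rw [hFmul, mul_inv_cancel, hF1]))
    (fun w w' => by
      ext x
      exact (DFunLike.congr_fun (hFmul w w') x).symm)
  have hΩ : ∀ w x, Ω w x = F w x := fun w x => rfl
  have hinj : Function.Injective Ω := by
    intro w w' e
    have e1 : F w a = F w' a := DFunLike.congr_fun e a
    have e2 : F w b = F w' b := DFunLike.congr_fun e b
    rw [hFa, hFa] at e1
    rw [hFb, hFb] at e2
    exact Prod.ext (Subtype.ext (mul_left_cancel e1)) (Subtype.ext (mul_left_cancel e2))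
  have hZ1 : upperCentralSeries (KGroup p m α) 1 = Subgroup.center (KGroup p m α) :=
    Subgroup.upperCentralSeries_one _
  have hrange : Ω.range = autC (KGroup p m α) 1 := by
    ext g
    constructor
    · rintro ⟨w, rfl⟩
      intro t
      rw [hZ1, hΩ]
      have ht : t ∈ Subgroup.closure {a, b} := hcl ▸ Subgroup.mem_top t
      induction ht using Subgroup.closure_induction with
      | mem x hx =>
        rcases hx with rfl | rfl
        · rw [hFa, Subgroup.mem_center_iff.1 w.1.2 a, mul_inv_cancel_right]; exact w.1.2
        · rw [hFb, Subgroup.mem_center_iff.1 w.2.2 b, mul_inv_cancel_right]; exact w.2.2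
      | one => simp
      | mul x y _ _ hx hy =>
        have : F w (x * y) * (x * y)⁻¹ = (F w x * x⁻¹) * (F w y * y⁻¹) := by
          have := Subgroup.mem_center_iff.1 hy x⁻¹
          rw [map_mul, mul_inv_rev, mul_assoc (F w x) x⁻¹, this]
          group
        rw [this]; exact Subgroup.mul_mem _ hx hy
      | inv x _ hx =>
        have : F w x⁻¹ * x⁻¹⁻¹ = (F w x * x⁻¹)⁻¹ := by
          have := Subgroup.mem_center_iff.1 (Subgroup.inv_mem _ hx) x
          rw [mul_inv_rev, inv_inv, ← mul_assoc] at this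
          rw [map_inv, inv_inv, mul_inv_rev, inv_inv]
          have h2 := congrArg (fun y => x⁻¹ * y) this
          simp only [← mul_assoc, inv_mul_cancel, one_mul] at h2
          simpa [mul_assoc] using h2.symm
        rw [this]; exact Subgroup.inv_mem _ hx
    · intro hg
      have hga : g a * a⁻¹ ∈ Subgroup.center (KGroup p m α) := hZ1 ▸ hg a
      have hgb : g b * b⁻¹ ∈ Subgroup.center (KGroup p m α) := hZ1 ▸ hg b
      refine ⟨(⟨_, hga⟩, ⟨_, hgb⟩), ?_⟩
      have : F (⟨_, hga⟩, ⟨_, hgb⟩) = g.toMonoidHom := by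
        apply hom_ext_pair hcl
        · rw [hFa, Subgroup.mem_center_iff.1 hga a]; simp
        · rw [hFb, Subgroup.mem_center_iff.1 hgb b]; simp
      ext x
      exact DFunLike.congr_fun this x
  refine ⟨Ω, hinj, hrange, ?_, ?_⟩
  · intro u v
    refine ⟨hFa (u, v), hFb (u, v), fun z hz => ?_⟩
    refine D.fix_Z2 u.2 v.2 (F (u, v)) (hFa _) (hFb _) fun y => ?_
    have := Subgroup.mem_upperCentralSeries_succ_iff.1 hz y
    rw [← hZ1]
    exact this
  · rw [← hrange, ← Nat.card_congr (MonoidHom.ofInjective hinj).toEquiv, Nat.card_prod,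
      D.card_center]
    ring
end

section
/- Let p be an odd prime, m ≥ 1, α = 1 + kp^m with p ∤ k, and J the group of order p^{7m} with presentation ⟨A,B | A^{[A,B]} = A^α, B^{[B,A]} = B^α, A^{p^{3m}} = 1, B^{p^{3m}} = 1⟩, with C = [A,B]. Then for every u ∈ Z_2(J) = ⟨A^{p^{2m}}, C^{p^m}⟩, one has (Au)^{p^m} = A^{p^m} and (Bu)^{p^m} = B^{p^m}. -/
/-- Relators of the Macdonald group `J(α)`:
`A^{[A,B]} = A^α`, `B^{[B,A]} = B^α`, `A^{p^{3m}} = 1`, `B^{p^{3m}} = 1`,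
with the convention `[A,B] = A⁻¹B⁻¹AB` and `x^y = y⁻¹xy`. -/
def jRels (p m : ℕ) (α : ℤ) : Set (FreeGroup (Fin 2)) :=
  let A : FreeGroup (Fin 2) := FreeGroup.of 0
  let B : FreeGroup (Fin 2) := FreeGroup.of 1
  let C : FreeGroup (Fin 2) := A⁻¹ * B⁻¹ * A * B
  {(C⁻¹ * A * C) * (A ^ α)⁻¹, (C * B * C⁻¹) * (B ^ α)⁻¹,
    A ^ (p ^ (3 * m)), B ^ (p ^ (3 * m))}

/-- The group `J(α)` of order `p^{7m}`. -/
abbrev JGroup (p m : ℕ) (α : ℤ) := PresentedGroup (jRels p m α)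


/-- expansion -/
theorem pow_expand (x : ℤ) (n : ℕ) :
    ∃ e : ℤ, (1 + x) ^ n = 1 + n * x + (n.choose 2 : ℤ) * x ^ 2 + x ^ 3 * e := by
  induction n with
  | zero => exact ⟨0, by simp⟩
  | succ n ih =>
    obtain ⟨e, he⟩ := ih
    refine ⟨e * (1 + x) + (n.choose 2 : ℤ), ?_⟩
    rw [pow_succ, he, Nat.choose_succ_succ' n 1]
    push_cast [Nat.choose_one_right]
    ring
theorem choose_odd (q : ℕ) (hq : Odd q) : ∃ r : ℕ, q.choose 2 = q * r := by
  obtain ⟨r, rfl⟩ := hq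
  refine ⟨r, ?_⟩
  rw [Nat.choose_two_right]
  simp only [Nat.add_sub_cancel]
  rw [Nat.div_eq_iff_eq_mul_left (by norm_num) ⟨(2 * r + 1) * r, by ring⟩]; ring
theorem geom_expand (x : ℤ) (n : ℕ) :
    ∃ e : ℤ, (∑ l ∈ Finset.range n, (1 + x) ^ l) = n + (n.choose 2 : ℤ) * x + x ^ 2 * e := by
  induction n with
  | zero => exact ⟨0, by simp⟩
  | succ n ih =>
    obtain ⟨e, he⟩ := ih
    obtain ⟨f, hf⟩ := pow_expand x n
    refine ⟨e + n.choose 2 + x * f, ?_⟩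
    rw [Finset.sum_range_succ, he, hf, Nat.choose_succ_succ' n 1]
    push_cast [Nat.choose_one_right]
    ring
/-- class two power formula -/
theorem mul_pow_class_two {G : Type*} [Group G] {A D E : G} (h : D * A = A * D * E)
    (hA : Commute E A) (hD : Commute E D) (n : ℕ) :
    (A * D) ^ n = A ^ n * D ^ n * E ^ (n.choose 2) := by
  have key : ∀ n : ℕ, D ^ n * A = A * D ^ n * E ^ n := by
    intro n
    induction n with
    | zero => simp
    | succ n ih =>
      calc D ^ (n + 1) * A = D ^ n * (D * A) := by rw [pow_succ]; group
        _ = (D ^ n * A) * D * E := by rw [h]; group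
        _ = A * D ^ n * (E ^ n * D) * E := by rw [ih]; group
        _ = A * D ^ n * (D * E ^ n) * E := by rw [(hD.pow_left n).eq]
        _ = _ := by rw [pow_succ, pow_succ]; group
  induction n with
  | zero => simp
  | succ n ih =>
    rw [pow_succ, ih, Nat.choose_succ_succ' n 1, Nat.choose_one_right, pow_add]
    calc A ^ n * D ^ n * E ^ n.choose 2 * (A * D)
        = A ^ n * D ^ n * (E ^ n.choose 2 * (A * D)) := by group
      _ = A ^ n * D ^ n * ((A * D) * E ^ n.choose 2) := by
          rw [((hA.mul_right hD).pow_left _).eq]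
      _ = A ^ n * (D ^ n * A) * D * E ^ n.choose 2 := by group
      _ = A ^ n * A * D ^ n * (E ^ n * D) * E ^ n.choose 2 := by rw [key]; group
      _ = A ^ n * A * D ^ n * (D * E ^ n) * E ^ n.choose 2 := by rw [(hD.pow_left n).eq]
      _ = _ := by rw [pow_succ, pow_succ]; group
/-- The defining relations (in semiconjugacy form), `q = p^m`. -/
structure JR {G : Type*} [Group G] (q : ℕ) (κ : ℤ) (A B C : G) : Prop where
  hC : SemiconjBy B (A * C) A
  hA : SemiconjBy C (A ^ (1 + κ * q)) A
  hB : SemiconjBy C B (B ^ (1 + κ * q))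
  A3 : A ^ ((q : ℤ) ^ 3) = 1
  B3 : B ^ ((q : ℤ) ^ 3) = 1
  odd : Odd q
  cop : IsCoprime κ (q : ℤ)

theorem zpow_eq_of_dvd {G : Type*} [Group G] {A : G} {N : ℤ} (h : A ^ N = 1) {x y : ℤ} (e : ℤ)
    (hxy : x = y + N * e) : A ^ x = A ^ y := by
  rw [hxy, zpow_add, zpow_mul, h, one_zpow, mul_one]

theorem zpow_coprime {G : Type*} [Group G] {A : G} {N k n : ℤ} (h : A ^ N = 1)
    (hk : IsCoprime k N) (hn : A ^ (k * n) = 1) : A ^ n = 1 := by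
  obtain ⟨a, b, hab⟩ := hk
  have : n = (k * n) * a + N * (b * n) := by linear_combination (-n) * hab
  rw [this, zpow_add, zpow_mul A (k * n), zpow_mul A N, hn, h]; simp

/-- the exponent `s` -/
theorem exists_s (q : ℕ) (hq : Odd q) (κ : ℤ) :
    ∃ s : ℤ, (∑ l ∈ Finset.range q, (1 + (-κ * q + κ ^ 2 * q ^ 2)) ^ l)
      = (q : ℤ) + (q : ℤ) ^ 2 * s := by
  obtain ⟨e, he⟩ := geom_expand (-κ * q + κ ^ 2 * q ^ 2) q
  obtain ⟨r, hr⟩ := choose_odd q hq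
  rw [he, hr]
  refine ⟨r * (-κ + κ ^ 2 * q) + (-κ + κ ^ 2 * q) ^ 2 * e, ?_⟩
  push_cast
  ring

/-- the exponent `s` -/
noncomputable def sval (q : ℕ) (κ : ℤ) (hq : Odd q) : ℤ := (exists_s q hq κ).choose

theorem sval_spec (q : ℕ) (κ : ℤ) (hq : Odd q) :
    (∑ l ∈ Finset.range q, (1 + (-κ * q + κ ^ 2 * q ^ 2)) ^ l)
      = (q : ℤ) + (q : ℤ) ^ 2 * sval q κ hq := (exists_s q hq κ).choose_spec

namespace JR

variable {G : Type*} [Group G] {q : ℕ} {κ : ℤ} {A B C : G}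

theorem symm (h : JR q κ A B C) : JR q κ B A C⁻¹ where
  hC := by
    have := h.hC
    unfold SemiconjBy at *
    rw [← mul_assoc, ← this]; group
  hA := by
    have := h.hB
    exact SemiconjBy.inv_symm_left this
  hB := SemiconjBy.inv_symm_left h.hA
  A3 := h.B3
  B3 := h.A3
  odd := h.odd
  cop := h.cop

theorem hAn (h : JR q κ A B C) (n : ℤ) : SemiconjBy C (A ^ ((1 + κ * q) * n)) (A ^ n) := by
  rw [zpow_mul]; exact h.hA.zpow_right n

theorem hAk (h : JR q κ A B C) (k : ℕ) (n : ℤ) :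
    SemiconjBy (C ^ k) (A ^ ((1 + κ * q) ^ k * n)) (A ^ n) := by
  induction k generalizing n with
  | zero => simp
  | succ k ih =>
    rw [pow_succ C k]
    refine SemiconjBy.mul_left (ih n) ?_
    have := h.hAn ((1 + κ * q) ^ k * n)
    rwa [← mul_assoc, ← pow_succ'] at this

theorem hAinv (h : JR q κ A B C) (n : ℤ) :
    SemiconjBy C (A ^ n) (A ^ ((1 + (-κ * q + κ ^ 2 * q ^ 2)) * n)) := by
  have := h.hAn ((1 + (-κ * q + κ ^ 2 * q ^ 2)) * n)
  rwa [zpow_eq_of_dvd (y := n) h.A3 (κ ^ 3 * n) (by ring)] at this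

theorem ACpow (h : JR q κ A B C) (n : ℕ) :
    (A * C) ^ n = A ^ (∑ l ∈ Finset.range n, (1 + (-κ * q + κ ^ 2 * q ^ 2)) ^ l) * C ^ n := by
  induction n with
  | zero => simp
  | succ n ih =>
    rw [pow_succ', ih, Finset.sum_range_succ', mul_assoc, ← mul_assoc C]
    rw [(h.hAinv _).eq]
    simp only [pow_zero, pow_succ' _ n]
    rw [add_comm _ (1 : ℤ), zpow_add, zpow_one]
    simp only [Finset.mul_sum, pow_succ', mul_assoc]

/-- `C ^ q` acts on `A` through `1 + κ q²`. -/
theorem hCq (h : JR q κ A B C) (n : ℤ) :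
    SemiconjBy (C ^ q) (A ^ ((1 + κ * q ^ 2) * n)) (A ^ n) := by
  have := h.hAk q n
  obtain ⟨e, he⟩ := pow_expand (κ * q) q
  obtain ⟨r, hr⟩ := choose_odd q h.odd
  rwa [zpow_eq_of_dvd (y := (1 + κ * q ^ 2) * n) h.A3 ((r * κ ^ 2 + κ ^ 3 * e) * n)
    (by rw [he, hr]; push_cast; ring)] at this

theorem comm_P_C (h : JR q κ A B C) (n : ℤ) : Commute C (A ^ ((q : ℤ) ^ 2 * n)) := by
  have := h.hAn ((q : ℤ) ^ 2 * n)
  rwa [zpow_eq_of_dvd (y := (q : ℤ) ^ 2 * n) h.A3 (κ * n) (by ring)] at this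

theorem comm_a_Cq (h : JR q κ A B C) (n : ℤ) : Commute (C ^ q) (A ^ ((q : ℤ) * n)) := by
  have := h.hCq ((q : ℤ) * n)
  rwa [zpow_eq_of_dvd (y := (q : ℤ) * n) h.A3 (κ * n) (by ring)] at this

theorem comm_A_Cqq (h : JR q κ A B C) : Commute (C ^ (q ^ 2)) A := by
  have h1 : ∀ k : ℕ, SemiconjBy ((C ^ q) ^ k) (A ^ (1 + κ * q ^ 2 * k)) A := by
    intro k
    induction k with
    | zero => simp
    | succ k ih =>
      rw [pow_succ]
      refine SemiconjBy.mul_left ih ?_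
      have := h.hCq (1 + κ * q ^ 2 * k)
      rwa [zpow_eq_of_dvd (y := 1 + κ * q ^ 2 * (k + 1 : ℕ)) h.A3 (κ ^ 2 * q * k)
        (by push_cast; ring)] at this
  have := h1 q
  rw [← pow_mul, ← pow_two] at this
  rwa [zpow_eq_of_dvd (y := 1) h.A3 κ (by ring), zpow_one] at this

theorem comm_B_Cqq (h : JR q κ A B C) : Commute (C ^ (q ^ 2)) B := by
  have := h.symm.comm_A_Cqq
  rw [inv_pow] at this
  exact Commute.inv_left_iff.mp this

/-- The fundamental formula `(A^{qn})^B = A^{qn + q² s n} C^{qn}`. -/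
theorem F (h : JR q κ A B C) (n : ℤ) :
    SemiconjBy B (A ^ ((q : ℤ) * n + (q : ℤ) ^ 2 * (sval q κ h.odd * n)) * C ^ ((q : ℤ) * n))
      (A ^ ((q : ℤ) * n)) := by
  have hs := sval_spec q κ h.odd
  set s := sval q κ h.odd with hsdef
  have h1 := (h.hC.pow_right q)
  rw [h.ACpow, hs] at h1
  have h2 := h1.zpow_right n
  have hc : Commute (A ^ ((q : ℤ) + (q : ℤ) ^ 2 * s)) (C ^ q) := by
    have := (h.comm_a_Cq (1 + q * s)).symm
    convert this using 2
    ring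
  rw [hc.mul_zpow, ← zpow_mul, ← zpow_natCast, ← zpow_natCast, ← zpow_mul, ← zpow_mul] at h2
  convert h2 using 3
  ring

theorem F' (h : JR q κ A B C) (n : ℤ) :
    SemiconjBy A (B ^ ((q : ℤ) * n + (q : ℤ) ^ 2 * (sval q κ h.odd * n)) * C ^ (-((q : ℤ) * n)))
      (B ^ ((q : ℤ) * n)) := by
  have := h.symm.F n
  rwa [inv_zpow'] at this

theorem PB (h : JR q κ A B C) (n : ℤ) :
    SemiconjBy B (A ^ ((q : ℤ) ^ 2 * n) * C ^ ((q : ℤ) ^ 2 * n)) (A ^ ((q : ℤ) ^ 2 * n)) := by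
  have := h.F ((q : ℤ) * n)
  rw [zpow_eq_of_dvd (y := (q : ℤ) ^ 2 * n) h.A3 (sval q κ h.odd * n) (by ring),
    show (q : ℤ) * (q * n) = (q : ℤ) ^ 2 * n by ring] at this
  exact this

theorem QA (h : JR q κ A B C) (n : ℤ) :
    SemiconjBy A (B ^ ((q : ℤ) ^ 2 * n) * C ^ (-((q : ℤ) ^ 2 * n))) (B ^ ((q : ℤ) ^ 2 * n)) := by
  have := h.symm.PB n
  rwa [inv_zpow'] at this

theorem C3 (h : JR q κ A B C) : C ^ ((q : ℤ) ^ 3) = 1 := by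
  have := h.PB q
  have e : (q : ℤ) ^ 2 * q = q ^ 3 := by ring
  rw [e, h.A3, one_mul] at this
  have := this.eq
  rw [one_mul] at this
  exact mul_eq_left.mp this

theorem comm_A_Cqqn (h : JR q κ A B C) (n : ℤ) : Commute (C ^ ((q : ℤ) ^ 2 * n)) A := by
  rw [zpow_mul]
  have := h.comm_A_Cqq.zpow_left n
  rwa [← zpow_natCast, Nat.cast_pow] at this

theorem comm_B_Cqqn (h : JR q κ A B C) (n : ℤ) : Commute (C ^ ((q : ℤ) ^ 2 * n)) B := by
  rw [zpow_mul]
  have := h.comm_B_Cqq.zpow_left n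
  rwa [← zpow_natCast, Nat.cast_pow] at this

theorem comm_Q_C (h : JR q κ A B C) (n : ℤ) : Commute C (B ^ ((q : ℤ) ^ 2 * n)) :=
  Commute.inv_left_iff.mp (h.symm.comm_P_C n)

theorem comm_P_Q (h : JR q κ A B C) (n l : ℤ) :
    Commute (A ^ ((q : ℤ) ^ 2 * n)) (B ^ ((q : ℤ) ^ 2 * l)) := by
  have h1 : ∀ k : ℕ, SemiconjBy (B ^ k) (A ^ ((q : ℤ) ^ 2 * n) * C ^ ((q : ℤ) ^ 2 * (n * k)))
      (A ^ ((q : ℤ) ^ 2 * n)) := by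
    intro k
    induction k with
    | zero => simp
    | succ k ih =>
      rw [pow_succ]
      refine SemiconjBy.mul_left ih ?_
      have := (h.PB n).mul_right (h.comm_B_Cqqn (n * k)).symm
      rw [mul_assoc, ← zpow_add] at this
      convert this using 3
      push_cast; ring
  have h2 := h1 (q ^ 2)
  rw [zpow_eq_of_dvd (y := 0) h.C3 (n * q) (by push_cast; ring), zpow_zero, mul_one] at h2
  have h3 : Commute (B ^ (q ^ 2)) (A ^ ((q : ℤ) ^ 2 * n)) := h2
  rw [zpow_mul B]
  have := h3.zpow_left l
  rw [← zpow_natCast, Nat.cast_pow] at this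
  exact this.symm

theorem CqA (h : JR q κ A B C) (j : ℤ) :
    SemiconjBy A (C ^ ((q : ℤ) * j) * A ^ ((q : ℤ) ^ 2 * (-κ * j))) (C ^ ((q : ℤ) * j)) := by
  have h1 : SemiconjBy A (C ^ q * A ^ ((q : ℤ) ^ 2 * (-κ))) (C ^ q) := by
    have := (h.hCq 1).eq
    rw [zpow_one, mul_one, zpow_add, zpow_one] at this
    unfold SemiconjBy
    rw [← mul_assoc, ← this, mul_assoc, mul_assoc, ← zpow_add,
      show κ * (q : ℤ) ^ 2 + (q : ℤ) ^ 2 * -κ = 0 by ring]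
    simp
  have h2 := h1.zpow_right j
  rw [((h.comm_P_C (-κ)).pow_left q).mul_zpow, ← zpow_mul, ← zpow_natCast, ← zpow_mul] at h2
  convert h2 using 3
  ring

theorem CqB (h : JR q κ A B C) (j : ℤ) :
    SemiconjBy B (C ^ ((q : ℤ) * j) * B ^ ((q : ℤ) ^ 2 * (κ * j))) (C ^ ((q : ℤ) * j)) := by
  have := h.symm.CqA (-j)
  rw [inv_zpow'] at this
  convert this using 3 <;> ring_nf

theorem comm_Cqq_all (h : JR q κ A B C) (n x y z : ℤ) :
    Commute (C ^ ((q : ℤ) ^ 2 * n)) (A ^ x * B ^ y * C ^ z) :=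
  (((h.comm_A_Cqqn n).zpow_right x).mul_right ((h.comm_B_Cqqn n).zpow_right y)).mul_right
    ((Commute.refl C).zpow_zpow _ _)

/-- `[A^q, B^q] = C^{q²}` -/
theorem ab (h : JR q κ A B C) :
    SemiconjBy (B ^ (q : ℤ)) (A ^ (q : ℤ) * C ^ ((q : ℤ) ^ 2)) (A ^ (q : ℤ)) := by
  set s := sval q κ h.odd with hs
  have h1 := (h.F' 1).eq
  rw [← hs, mul_one, mul_one, zpow_add] at h1
  -- D = C^q Q^{-s}
  set D := C ^ (q : ℤ) * B ^ ((q : ℤ) ^ 2 * (-s)) with hD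
  set E := A ^ ((q : ℤ) ^ 2 * (-κ)) * C ^ ((q : ℤ) ^ 2 * s) with hE
  have cQ : Commute (C ^ (q : ℤ)) (B ^ ((q : ℤ) ^ 2 * (-s))) := (h.comm_Q_C _).zpow_left _
  have h2 : SemiconjBy (B ^ (q : ℤ)) (A * D) A := by
    unfold SemiconjBy
    rw [← mul_assoc, ← h1, hD, mul_neg, zpow_neg, zpow_neg]
    group
  have h3 : D * A = A * D * E := by
    have e1 := (h.CqA 1).eq
    have e2 := (h.QA (-s)).eq
    rw [mul_one, mul_one] at e1
    rw [hD, mul_assoc, ← e2]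
    rw [← mul_assoc, ← e1, hE]
    have e3 := (h.comm_P_Q (-κ) (-s)).eq
    rw [show -((q : ℤ) ^ 2 * -s) = (q : ℤ) ^ 2 * s by ring]
    simp only [mul_assoc]
    rw [← mul_assoc (A ^ _) (B ^ _), e3]
    simp only [mul_assoc]
  have cEA : Commute E A := by
    refine Commute.mul_left ?_ (h.comm_A_Cqqn s)
    exact (Commute.refl A).zpow_left _
  have cED : Commute E D := by
    refine Commute.mul_left ?_ ?_
    · exact Commute.mul_right ((h.comm_P_C _).zpow_left _).symm (h.comm_P_Q _ _)
    · exact Commute.mul_right ((Commute.refl C).zpow_zpow _ _) ((h.comm_B_Cqqn s).zpow_right _)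
  have h4 := mul_pow_class_two h3 cEA cED q
  have h5 := h2.pow_right q
  have hEq : E ^ q = 1 := by
    have : Commute (A ^ ((q : ℤ) ^ 2 * (-κ))) (C ^ ((q : ℤ) ^ 2 * s)) :=
      ((h.comm_A_Cqqn s).zpow_right _).symm
    rw [hE, this.mul_pow, ← zpow_natCast, ← zpow_natCast, ← zpow_mul, ← zpow_mul,
      zpow_eq_of_dvd (y := 0) h.A3 (-κ) (by ring), zpow_eq_of_dvd (y := 0) h.C3 s (by ring)]
    simp
  have hDq : D ^ q = C ^ ((q : ℤ) ^ 2) := by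
    rw [hD, cQ.mul_pow, ← zpow_natCast, ← zpow_natCast, ← zpow_mul, ← zpow_mul,
      zpow_eq_of_dvd (y := 0) h.B3 (-s) (by ring), zpow_zero, mul_one]
    ring_nf
  obtain ⟨r, hr⟩ := choose_odd q h.odd
  rw [h4, hDq, hr, pow_mul, hEq, one_pow, mul_one, ← zpow_natCast] at h5
  exact h5

theorem hCA (h : JR q κ A B C) (k : ℕ) :
    SemiconjBy A (C ^ k * A ^ (1 - (1 + κ * q) ^ k)) (C ^ k) := by
  have := (h.hAk k 1).eq
  rw [zpow_one, mul_one] at this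
  unfold SemiconjBy
  rw [← mul_assoc, ← this, mul_assoc, ← zpow_add]
  simp

theorem qcop (h : JR q κ A B C) : IsCoprime κ ((q : ℤ) ^ 3) := h.cop.pow_right

/-- Consequences of `[u, A]` being central, for `u = A^{qi} B^{qj} C^k`. -/
theorem half (h : JR q κ A B C) {u z : G} {i j : ℤ} {k : ℕ}
    (hu : u = A ^ ((q : ℤ) * i) * B ^ ((q : ℤ) * j) * C ^ k)
    (hz : ∀ g, Commute z g) (huz : SemiconjBy A (u * z) u) :
    A ^ ((q : ℤ) ^ 2 * k) = 1 ∧ A ^ ((q : ℤ) ^ 2 * j) = 1 ∧ C ^ ((q : ℤ) ^ 2 * j) = 1 ∧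
      z = B ^ ((q : ℤ) ^ 2 * (sval q κ h.odd * j)) * C ^ (-((q : ℤ) * j))
        * A ^ ((q : ℤ) * (-κ * k)) := by
  set s := sval q κ h.odd with hs
  have e1 : SemiconjBy A (A ^ ((q : ℤ) * i) * (B ^ ((q : ℤ) * j + (q : ℤ) ^ 2 * (s * j)) *
      C ^ (-((q : ℤ) * j))) * (C ^ k * A ^ (1 - (1 + κ * q) ^ k))) u := by
    rw [hu]
    exact (SemiconjBy.mul_right ((Commute.refl A).zpow_right _) (h.F' j)).mul_right (h.hCA k)
  have e2 : z = B ^ ((q : ℤ) ^ 2 * (s * j)) * C ^ (-((q : ℤ) * j)) *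
      A ^ (1 - (1 + κ * q) ^ k) := by
    have := mul_left_cancel (huz.eq.trans e1.eq.symm)
    rw [hu, zpow_add] at this
    have c1 : Commute (C ^ k) (B ^ ((q : ℤ) ^ 2 * (s * j)) * C ^ (-((q : ℤ) * j))) :=
      Commute.mul_right ((h.comm_Q_C _).pow_left k)
        (((Commute.refl C).pow_left k).zpow_right _)
    have e3 : A ^ ((q : ℤ) * i) * (B ^ ((q : ℤ) * j) * B ^ ((q : ℤ) ^ 2 * (s * j)) *
      C ^ (-((q : ℤ) * j))) * (C ^ k * A ^ (1 - (1 + κ * q) ^ k)) =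
      A ^ ((q : ℤ) * i) * B ^ ((q : ℤ) * j) * C ^ k * (B ^ ((q : ℤ) ^ 2 * (s * j)) *
      C ^ (-((q : ℤ) * j)) * A ^ (1 - (1 + κ * q) ^ k)) := by
      calc _ = A ^ ((q : ℤ) * i) * B ^ ((q : ℤ) * j) * ((B ^ ((q : ℤ) ^ 2 * (s * j)) *
          C ^ (-((q : ℤ) * j))) * C ^ k) * A ^ (1 - (1 + κ * q) ^ k) := by
            simp only [mul_assoc]
        _ = _ := by rw [← c1.eq]; simp only [mul_assoc]
    rw [e3] at this
    exact mul_left_cancel this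
  obtain ⟨e, he⟩ := pow_expand (κ * q) k
  set W := B ^ ((q : ℤ) ^ 2 * (s * j)) * C ^ (-((q : ℤ) * j)) with hW
  have cWC : Commute C W :=
    Commute.mul_right (h.comm_Q_C _) ((Commute.refl C).zpow_right _)
  have eA : A ^ (1 - (1 + κ * q) ^ k) = W⁻¹ * z := by rw [e2]; group
  -- commuting with C
  have k1 : A ^ ((q : ℤ) ^ 2 * k) = 1 := by
    have c : Commute C (A ^ (1 - (1 + κ * q) ^ k)) := by
      rw [eA]; exact cWC.inv_right.mul_right (hz C).symm
    have c2 := (h.hAn (1 - (1 + κ * q) ^ k)).eq.trans c.eq.symm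
    have c3 := mul_left_cancel c2
    have c4 : A ^ (κ * (κ * ((q : ℤ) ^ 2 * k))) = 1 := by
      have : A ^ ((1 + κ * q) * (1 - (1 + κ * q) ^ k) - (1 - (1 + κ * q) ^ k)) = 1 := by
        rw [zpow_sub, c3, mul_inv_cancel]
      rw [zpow_eq_of_dvd (y := -(κ * (κ * ((q : ℤ) ^ 2 * k)))) h.A3
        (-(k.choose 2 : ℤ) * κ ^ 3 - κ ^ 4 * q * e) (by rw [he]; ring)] at this
      rwa [zpow_neg, inv_eq_one] at this
    exact zpow_coprime h.A3 h.qcop (zpow_coprime h.A3 h.qcop c4)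
  have k2 : A ^ (1 - (1 + κ * q) ^ k) = A ^ ((q : ℤ) * (-κ * k)) := by
    have c : A ^ ((q : ℤ) ^ 2 * (k.choose 2 : ℤ)) = 1 := by
      have h2 : IsCoprime (2 : ℤ) ((q : ℤ) ^ 3) := by
        apply IsCoprime.pow_right
        obtain ⟨r, hr⟩ := h.odd
        exact ⟨-r, 1, by rw [hr]; push_cast; ring⟩
      apply zpow_coprime h.A3 h2
      have : (2 : ℤ) * ((q : ℤ) ^ 2 * (k.choose 2 : ℤ)) = ((q : ℤ) ^ 2 * k) * ((k : ℤ) - 1) := by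
        have : ((k.choose 2 : ℕ) : ℤ) * 2 = k * ((k : ℤ) - 1) := by
          have := Nat.cast_choose_two ℚ k
          have h3 : ((k.choose 2 : ℕ) : ℚ) * 2 = k * ((k : ℚ) - 1) := by rw [this]; ring
          exact_mod_cast h3
        linear_combination (q : ℤ) ^ 2 * this
      rw [this, zpow_mul, k1, one_zpow]
    rw [zpow_eq_of_dvd (y := (q : ℤ) * (-κ * k) + ((q : ℤ) ^ 2 * (k.choose 2 : ℤ)) * (-κ ^ 2))
      h.A3 (-κ ^ 3 * e) (by rw [he]; ring), zpow_add, zpow_mul A ((q : ℤ) ^ 2 * _), c]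
    simp
  -- commuting with A
  have c : Commute A W := by
    have : W = z * (A ^ (1 - (1 + κ * q) ^ k))⁻¹ := by rw [e2]; group
    rw [this]
    exact (hz A).symm.mul_right ((Commute.refl A).zpow_right _).inv_right
  have c5 : C ^ (-((q : ℤ) ^ 2 * (s * j))) * A ^ ((q : ℤ) ^ 2 * (κ * j)) = 1 := by
    have d := (h.QA (s * j)).mul_right (h.CqA (-j))
    rw [show (q : ℤ) * -j = -((q : ℤ) * j) by ring, ← hW,
      show (q : ℤ) ^ 2 * (-κ * -j) = (q : ℤ) ^ 2 * (κ * j) by ring] at d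
    have d2 := mul_left_cancel (d.eq.trans c.eq.symm)
    have d3 : W * (C ^ (-((q : ℤ) ^ 2 * (s * j))) * A ^ ((q : ℤ) ^ 2 * (κ * j))) = W := by
      refine Eq.trans ?_ d2
      rw [hW]
      have : Commute (C ^ (-((q : ℤ) ^ 2 * (s * j)))) (C ^ (-((q : ℤ) * j))) :=
        (Commute.refl C).zpow_zpow _ _
      simp only [mul_assoc]
      rw [← mul_assoc (C ^ (-((q : ℤ) ^ 2 * (s * j)))) (C ^ (-((q : ℤ) * j))), this.eq]
      simp only [mul_assoc]
    exact mul_eq_left.mp d3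
  have c6 : A ^ ((q : ℤ) ^ 2 * (κ * j)) = C ^ ((q : ℤ) ^ 2 * (s * j)) := by
    rw [zpow_neg] at c5
    exact (inv_mul_eq_one.mp c5).symm
  have c7 : C ^ ((q : ℤ) ^ 2 * j) = 1 := by
    have d := (h.PB (κ * j)).eq
    have d2 : Commute B (A ^ ((q : ℤ) ^ 2 * (κ * j))) := by
      rw [c6]; exact (h.comm_B_Cqqn _).symm
    have d3 := mul_left_cancel (d.trans d2.eq.symm)
    have d4 := mul_eq_left.mp d3
    apply zpow_coprime h.C3 h.qcop
    rw [← d4]; ring_nf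
  refine ⟨k1, ?_, c7, by rw [e2, k2]⟩
  apply zpow_coprime h.A3 h.qcop
  rw [show κ * ((q : ℤ) ^ 2 * j) = (q : ℤ) ^ 2 * (κ * j) by ring, c6,
    show (q : ℤ) ^ 2 * (s * j) = ((q : ℤ) ^ 2 * j) * s by ring, zpow_mul, c7, one_zpow]

theorem ab_zpow (h : JR q κ A B C) (i j : ℤ) :
    A ^ ((q : ℤ) * i) * B ^ ((q : ℤ) * j) =
      B ^ ((q : ℤ) * j) * A ^ ((q : ℤ) * i) * C ^ ((q : ℤ) ^ 2 * (i * j)) := by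
  have c1 : Commute (A ^ (q : ℤ)) (C ^ ((q : ℤ) ^ 2)) := by
    have := ((h.comm_A_Cqqn 1).zpow_right (q : ℤ)).symm
    rwa [mul_one] at this
  have h1 := (h.ab.zpow_right i).eq
  rw [c1.mul_zpow, ← zpow_mul, ← zpow_mul] at h1
  have c2 : Commute (C ^ ((q : ℤ) ^ 2 * i)) (A ^ ((q : ℤ) * i)) := (h.comm_A_Cqqn i).zpow_right _
  have c3 : Commute (B ^ (q : ℤ)) (C ^ ((q : ℤ) ^ 2 * i)) := ((h.comm_B_Cqqn i).zpow_right _).symm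
  have h2 : SemiconjBy (A ^ ((q : ℤ) * i)) (B ^ (q : ℤ)) (B ^ (q : ℤ) * C ^ ((q : ℤ) ^ 2 * i)) := by
    unfold SemiconjBy
    rw [← h1, mul_assoc, c2.eq]
  have h3 := (h2.zpow_right j).eq
  rw [c3.mul_zpow, ← zpow_mul, ← zpow_mul] at h3
  rw [h3, mul_assoc, mul_assoc]
  have c4 := ((h.comm_A_Cqqn (i * j)).zpow_right ((q : ℤ) * i)).eq
  rw [c4, mul_assoc]

theorem exists_nat_pow (h : JR q κ A B C) (k : ℤ) : ∃ n : ℕ, C ^ k = C ^ n := by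
  have hq : (0 : ℤ) < (q : ℤ) ^ 3 := by
    have := h.odd.pos
    positivity
  refine ⟨(k % (q : ℤ) ^ 3).toNat, ?_⟩
  rw [← zpow_natCast, Int.toNat_of_nonneg (Int.emod_nonneg _ hq.ne')]
  exact zpow_eq_of_dvd h.C3 (k / (q : ℤ) ^ 3) (Int.emod_add_mul_ediv k _).symm

/-- Elements of `K` lying in the second centre have exponent `q`. -/
theorem upow (h : JR q κ A B C) (hsym : ∀ n : ℤ, A ^ n = 1 ↔ B ^ n = 1) {u z w : G} {i j : ℤ}
    {k : ℕ} (hu : u = A ^ ((q : ℤ) * i) * B ^ ((q : ℤ) * j) * C ^ k)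
    (hz : ∀ g, Commute z g) (huz : SemiconjBy A (u * z) u)
    (hw : ∀ g, Commute w g) (huw : SemiconjBy B (u * w) u) : u ^ q = 1 := by
  obtain ⟨k1, k2, k3, k4⟩ := h.half hu hz huz
  have hu' : ∃ k' : ℕ, u = B ^ ((q : ℤ) * j) * A ^ ((q : ℤ) * i) * C⁻¹ ^ k' := by
    obtain ⟨n, hn⟩ := h.symm.exists_nat_pow (-((q : ℤ) ^ 2 * (i * j) + k))
    refine ⟨n, ?_⟩
    rw [hu, h.ab_zpow, ← hn, inv_zpow', neg_neg, zpow_add, zpow_natCast, mul_assoc]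
  obtain ⟨k', hk'⟩ := hu'
  obtain ⟨-, l2, l3, -⟩ := h.symm.half hk' hw huw
  rw [inv_zpow, inv_eq_one] at l3
  have Ai := (hsym _).mpr l2
  have Bj := (hsym _).mp k2
  have Ck : C ^ ((q : ℤ) * k) = 1 := by
    rw [show (q : ℤ) ^ 2 * (sval q κ h.odd * j) = (q : ℤ) ^ 2 * j * sval q κ h.odd by ring,
      zpow_mul B, Bj, one_zpow, one_mul] at k4
    have c1 : Commute B (C ^ (-((q : ℤ) * j))) := by
      have := h.CqB (-j)
      rw [show (q : ℤ) ^ 2 * (κ * -j) = (q : ℤ) ^ 2 * j * (-κ) by ring, zpow_mul B, Bj, one_zpow,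
        mul_one, mul_neg] at this
      exact this
    have c2 : Commute B (A ^ ((q : ℤ) * (-κ * k))) := by
      have : A ^ ((q : ℤ) * (-κ * k)) = (C ^ (-((q : ℤ) * j)))⁻¹ * z := by rw [k4]; group
      rw [this]
      exact c1.inv_right.mul_right (hz B).symm
    have c3 := h.F (-κ * k)
    rw [zpow_add, show (q : ℤ) ^ 2 * (sval q κ h.odd * (-κ * k)) =
      (q : ℤ) ^ 2 * k * (sval q κ h.odd * (-κ)) by ring, zpow_mul A ((q : ℤ) ^ 2 * k), k1,
      one_zpow, mul_one] at c3
    have c4 := mul_eq_left.mp (mul_left_cancel (c3.eq.trans c2.eq.symm))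
    apply zpow_coprime h.C3 h.qcop
    rw [show (q : ℤ) * (-κ * k) = -(κ * ((q : ℤ) * k)) by ring, zpow_neg, inv_eq_one] at c4
    exact c4
  have cab : Commute (A ^ ((q : ℤ) * i)) (B ^ ((q : ℤ) * j)) := by
    have := h.ab_zpow i j
    rw [← mul_assoc ((q : ℤ) ^ 2), zpow_mul C, l3, one_zpow, mul_one] at this
    exact this
  have cCa : Commute C (A ^ ((q : ℤ) * i)) := by
    have := h.hAn ((q : ℤ) * i)
    rw [show (1 + κ * (q : ℤ)) * (q * i) = q * i + (q : ℤ) ^ 2 * i * κ by ring, zpow_add,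
      zpow_mul A ((q : ℤ) ^ 2 * i), Ai, one_zpow, mul_one] at this
    exact this
  have cCb : Commute C (B ^ ((q : ℤ) * j)) := by
    have := h.symm.hAn ((q : ℤ) * j)
    rw [show (1 + κ * (q : ℤ)) * (q * j) = q * j + (q : ℤ) ^ 2 * j * κ by ring, zpow_add,
      zpow_mul B ((q : ℤ) ^ 2 * j), Bj, one_zpow, mul_one] at this
    exact Commute.inv_left_iff.mp this
  rw [hu, (Commute.mul_left (cCa.pow_left k).symm (cCb.pow_left k).symm).mul_pow, cab.mul_pow]
  rw [← zpow_natCast, ← zpow_natCast, ← zpow_natCast, ← zpow_natCast, ← zpow_mul, ← zpow_mul,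
    ← zpow_mul, show (q : ℤ) * i * q = (q : ℤ) ^ 2 * i by ring,
    show (q : ℤ) * j * q = (q : ℤ) ^ 2 * j by ring, Ai, Bj, mul_comm (k : ℤ), Ck]
  simp

/-- The normal subgroup `K = ⟨A^q, B^q, C⟩`. -/
def K (q : ℕ) (A B C : G) : Subgroup G :=
  Subgroup.closure {A ^ (q : ℤ), B ^ (q : ℤ), C}

theorem a_mem (n : ℤ) : A ^ ((q : ℤ) * n) ∈ K q A B C := by
  rw [zpow_mul]
  exact zpow_mem (Subgroup.subset_closure (by simp)) n

theorem b_mem (n : ℤ) : B ^ ((q : ℤ) * n) ∈ K q A B C := by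
  rw [zpow_mul]
  exact zpow_mem (Subgroup.subset_closure (by simp)) n

theorem c_mem : C ∈ K q A B C := Subgroup.subset_closure (by simp)

theorem K_symm : K q B A C⁻¹ = K q A B C := by
  apply le_antisymm
  · rw [K, Subgroup.closure_le]
    rintro x (rfl | rfl | rfl)
    · exact Subgroup.subset_closure (by simp)
    · exact Subgroup.subset_closure (by simp)
    · exact inv_mem c_mem
  · rw [K, Subgroup.closure_le]
    rintro x (rfl | rfl | rfl)
    · exact Subgroup.subset_closure (by simp)
    · exact Subgroup.subset_closure (by simp)
    · simpa using inv_mem (c_mem (q := q) (A := B) (B := A) (C := x⁻¹))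

theorem conjB_mem (h : JR q κ A B C) {x : G} (hx : x ∈ K q A B C) :
    B⁻¹ * x * B ∈ K q A B C := by
  have : K q A B C ≤ (K q A B C).comap (MulAut.conj B⁻¹).toMonoidHom := by
    conv_lhs => rw [K]
    rw [Subgroup.closure_le]
    have key : ∀ {y y' : G}, SemiconjBy B y' y → y' ∈ K q A B C →
        y ∈ ((K q A B C).comap (MulAut.conj B⁻¹).toMonoidHom : Set G) := by
      intro y y' hy hy'
      have : B⁻¹ * y * B = y' := by rw [mul_assoc, ← hy.eq]; group
      simpa [this] using hy'
    rintro x (rfl | rfl | rfl)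
    · have := h.F 1
      rw [mul_one] at this
      refine key this (mul_mem ?_ (zpow_mem c_mem _))
      have := a_mem (A := A) (B := B) (C := C) (q := q) (1 + q * (sval q κ h.odd * 1))
      convert this using 2
      ring
    · have := b_mem (A := A) (B := B) (C := C) (q := q) 1
      rw [mul_one] at this
      exact key ((Commute.refl B).zpow_right _) this
    · have := (h.symm.hCA 1)
      simp only [pow_one] at this
      have h2 := this.inv_right
      rw [inv_inv] at h2
      refine key h2 (inv_mem (mul_mem (inv_mem c_mem) ?_))
      have := b_mem (A := A) (B := B) (C := x) (q := q) (-κ)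
      convert this using 2
      ring
  have := this hx
  simpa using this

theorem conjA_mem (h : JR q κ A B C) {x : G} (hx : x ∈ K q A B C) :
    A⁻¹ * x * A ∈ K q A B C := by
  rw [← K_symm] at *
  exact h.symm.conjB_mem hx

theorem conjC (h : JR q κ A B C) (k n : ℤ) : ∃ t : ℤ, C ^ k * A ^ ((q : ℤ) * n) =
    A ^ ((q : ℤ) * t) * C ^ k := by
  obtain ⟨l, hl⟩ := h.exists_nat_pow (-k)
  refine ⟨(1 + κ * q) ^ l * n, ?_⟩
  have := (h.hAk l ((q : ℤ) * n)).eq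
  rw [← hl, zpow_neg] at this
  rw [show (q : ℤ) * ((1 + κ * q) ^ l * n) = (1 + κ * q) ^ l * (q * n) by ring]
  have h2 : A ^ ((1 + κ * (q : ℤ)) ^ l * (q * n)) = C ^ k * (A ^ ((q : ℤ) * n) * (C ^ k)⁻¹) := by
    rw [← this]; group
  rw [h2]; group

theorem mem_K (h : JR q κ A B C) {x : G} (hx : x ∈ K q A B C) :
    ∃ i j k : ℤ, x = A ^ ((q : ℤ) * i) * B ^ ((q : ℤ) * j) * C ^ k := by
  have stepA : ∀ (x : G) (n : ℤ), (∃ i j k : ℤ, x = A ^ ((q : ℤ) * i) * B ^ ((q : ℤ) * j) * C ^ k) →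
      (∃ i j k : ℤ, x * A ^ ((q : ℤ) * n) = A ^ ((q : ℤ) * i) * B ^ ((q : ℤ) * j) * C ^ k) := by
    rintro x n ⟨i, j, k, rfl⟩
    obtain ⟨t, ht⟩ := h.conjC k n
    refine ⟨i + t, j, -((q : ℤ) ^ 2 * (t * j)) + k, ?_⟩
    have e := h.ab_zpow t j
    have c : Commute (C ^ ((q : ℤ) ^ 2 * (t * j))) (A ^ ((q : ℤ) * t)) :=
      (h.comm_A_Cqqn _).zpow_right _
    have e2 : B ^ ((q : ℤ) * j) * A ^ ((q : ℤ) * t) =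
        A ^ ((q : ℤ) * t) * B ^ ((q : ℤ) * j) * (C ^ ((q : ℤ) ^ 2 * (t * j)))⁻¹ := by
      rw [e]; group
    rw [mul_assoc, ht, mul_add, zpow_add, zpow_add, zpow_neg]
    calc _ = A ^ ((q : ℤ) * i) * (B ^ ((q : ℤ) * j) * A ^ ((q : ℤ) * t)) * C ^ k := by
          simp only [mul_assoc]
      _ = _ := by rw [e2]; simp only [mul_assoc]
  have stepB : ∀ (x : G) (n : ℤ), (∃ i j k : ℤ, x = A ^ ((q : ℤ) * i) * B ^ ((q : ℤ) * j) * C ^ k) →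
      (∃ i j k : ℤ, x * B ^ ((q : ℤ) * n) = A ^ ((q : ℤ) * i) * B ^ ((q : ℤ) * j) * C ^ k) := by
    rintro x n ⟨i, j, k, rfl⟩
    obtain ⟨t, ht⟩ := h.symm.conjC (-k) n
    rw [inv_zpow', neg_neg] at ht
    refine ⟨i, j + t, k, ?_⟩
    rw [mul_assoc, ht, mul_add, zpow_add]
    simp only [mul_assoc]
  have stepC : ∀ (x : G) (n : ℤ), (∃ i j k : ℤ, x = A ^ ((q : ℤ) * i) * B ^ ((q : ℤ) * j) * C ^ k) →
      (∃ i j k : ℤ, x * C ^ n = A ^ ((q : ℤ) * i) * B ^ ((q : ℤ) * j) * C ^ k) := by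
    rintro x n ⟨i, j, k, rfl⟩
    exact ⟨i, j, k + n, by rw [zpow_add]; simp only [mul_assoc]⟩
  unfold K at hx
  induction hx using Subgroup.closure_induction_right with
  | one => exact ⟨0, 0, 0, by simp⟩
  | mul_right x hx y hy ih =>
    rcases hy with rfl | rfl | rfl
    · simpa using stepA x 1 ih
    · simpa using stepB x 1 ih
    · simpa using stepC x 1 ih
  | mul_inv_cancel x hx y hy ih =>
    rcases hy with rfl | rfl | rfl
    · simpa using stepA x (-1) ih
    · simpa using stepB x (-1) ih
    · simpa using stepC x (-1) ih

theorem BC_pow (h : JR q κ A B C) (j : ℕ) : ∃ y ∈ K q A B C, (B * C⁻¹) ^ j = B ^ j * y := by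
  induction j with
  | zero => exact ⟨1, one_mem _, by simp⟩
  | succ j ih =>
    obtain ⟨y, hy, e⟩ := ih
    refine ⟨B⁻¹ * y * B * C⁻¹, mul_mem (h.conjB_mem hy) (inv_mem c_mem), ?_⟩
    rw [pow_succ, e, pow_succ]; group

theorem decomp (h : JR q κ A B C) (hgen : Subgroup.closure {A, B} = ⊤) (u : G) :
    ∃ i j : ℕ, ∃ x ∈ K q A B C, u = A ^ i * B ^ j * x := by
  have stepA : ∀ u : G, (∃ i j : ℕ, ∃ x ∈ K q A B C, u = A ^ i * B ^ j * x) →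
      (∃ i j : ℕ, ∃ x ∈ K q A B C, u * A = A ^ i * B ^ j * x) := by
    rintro u ⟨i, j, x, hx, rfl⟩
    obtain ⟨y, hy, e⟩ := h.BC_pow j
    refine ⟨i + 1, j, y * (A⁻¹ * x * A), mul_mem hy (h.conjA_mem hx), ?_⟩
    have e2 := (h.symm.hC.pow_right j).eq
    rw [e] at e2
    calc _ = A ^ i * (B ^ j * A) * (A⁻¹ * x * A) := by group
      _ = _ := by rw [← e2, pow_succ]; simp only [mul_assoc]
  have stepB : ∀ u : G, (∃ i j : ℕ, ∃ x ∈ K q A B C, u = A ^ i * B ^ j * x) →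
      (∃ i j : ℕ, ∃ x ∈ K q A B C, u * B = A ^ i * B ^ j * x) := by
    rintro u ⟨i, j, x, hx, rfl⟩
    refine ⟨i, j + 1, B⁻¹ * x * B, h.conjB_mem hx, ?_⟩
    rw [pow_succ]; group
  have iter : ∀ g : G, (∀ u : G, (∃ i j : ℕ, ∃ x ∈ K q A B C, u = A ^ i * B ^ j * x) →
      (∃ i j : ℕ, ∃ x ∈ K q A B C, u * g = A ^ i * B ^ j * x)) → g ^ ((q : ℤ) ^ 3) = 1 →
      (∀ u : G, (∃ i j : ℕ, ∃ x ∈ K q A B C, u = A ^ i * B ^ j * x) →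
      (∃ i j : ℕ, ∃ x ∈ K q A B C, u * g⁻¹ = A ^ i * B ^ j * x)) := by
    intro g hg h3
    have hn : ∀ n : ℕ, ∀ u : G, (∃ i j : ℕ, ∃ x ∈ K q A B C, u = A ^ i * B ^ j * x) →
      (∃ i j : ℕ, ∃ x ∈ K q A B C, u * g ^ n = A ^ i * B ^ j * x) := by
      intro n
      induction n with
      | zero => simp
      | succ n ih =>
        intro u hu
        have := hg _ (ih u hu)
        rwa [mul_assoc, ← pow_succ] at this
    have e : g⁻¹ = g ^ (q ^ 3 - 1) := by
      have hq : 1 ≤ q ^ 3 := Nat.one_le_pow _ _ h.odd.pos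
      rw [inv_eq_iff_mul_eq_one, ← pow_succ', Nat.sub_add_cancel hq, ← zpow_natCast]
      exact_mod_cast h3
    rw [e]
    exact hn _
  have hu : u ∈ Subgroup.closure {A, B} := by rw [hgen]; trivial
  induction hu using Subgroup.closure_induction_right with
  | one => exact ⟨0, 0, 1, one_mem _, by simp⟩
  | mul_right x hx y hy ih =>
    rcases hy with rfl | rfl
    · exact stepA x ih
    · exact stepB x ih
  | mul_inv_cancel x hx y hy ih =>
    rcases hy with rfl | rfl
    · exact iter _ stepA h.A3 x ih
    · exact iter _ stepB h.B3 x ih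

theorem model_dvd (h : JR q κ A B C) (hn : ∀ n : ℤ, A ^ n = 1 → (q : ℤ) ^ 2 ∣ n) {i : ℤ}
    (hc : Commute C (A ^ i)) : (q : ℤ) ∣ i := by
  have h1 := mul_left_cancel ((h.hAn i).eq.trans hc.eq.symm)
  have h2 : A ^ ((1 + κ * q) * i - i) = 1 := by rw [zpow_sub, h1, mul_inv_cancel]
  have h3 := hn _ h2
  rw [show (1 + κ * (q : ℤ)) * i - i = q * (κ * i) by ring, pow_two] at h3
  have hq : (q : ℤ) ≠ 0 := by exact_mod_cast h.odd.pos.ne'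
  exact h.cop.symm.dvd_of_dvd_mul_left (Int.dvd_of_mul_dvd_mul_left hq h3)

theorem comm_of_K {H : Type*} [Group H] {A' B' C' : H} (h : JR q κ A' B' C')
    (hA : A' ^ ((q : ℤ) ^ 2) = 1) (hB : B' ^ (q : ℤ) = 1) (φ : G →* H)
    (a : φ A = A') (b : φ B = B') (c : φ C = C') {x : G} (hx : x ∈ K q A B C) :
    Commute C' (φ x) := by
  have : K q A B C ≤ (Subgroup.centralizer {C'}).comap φ := by
    rw [K, Subgroup.closure_le]
    rintro y (rfl | rfl | rfl)
    · have h1 := h.hAn (q : ℤ)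
      rw [zpow_eq_of_dvd (y := (q : ℤ)) hA κ (by ring)] at h1
      simpa [Subgroup.mem_centralizer_iff, a] using h1.eq
    · simp [Subgroup.mem_centralizer_iff, b]; simp_all
    · simp [Subgroup.mem_centralizer_iff, c]
  have := this hx
  have h2 : C' * φ x = φ x * C' := by simpa [Subgroup.mem_centralizer_iff] using this
  exact h2

theorem comm_BC (h : JR q κ A B C) (hB : B ^ (q : ℤ) = 1) : Commute C B := by
  have := h.hB
  rwa [zpow_eq_of_dvd (y := 1) hB κ (by ring), zpow_one] at this

theorem eqC (h : JR q κ A B C) : C = A⁻¹ * B⁻¹ * A * B := by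
  have := h.hC.eq
  rw [mul_assoc, ← this]; group

theorem comm_central {z w : G} (hz : ∀ g, Commute z g) (hw : ∀ g, Commute w g) :
    (A * z)⁻¹ * (B * w)⁻¹ * (A * z) * (B * w) = A⁻¹ * B⁻¹ * A * B := by
  have e1 : (A * z) * (B * w) = (A * B) * (z * w) := by
    rw [mul_assoc, ← mul_assoc z, (hz B).eq]; simp only [mul_assoc]
  have e2 : (B * w) * (A * z) = (B * A) * (z * w) := by
    rw [mul_assoc, ← mul_assoc w, (hw A).eq, (hz w).eq]; simp only [mul_assoc]
  have c : Commute (z * w) ((B * A)⁻¹ * (A * B)) := (hz _).mul_left (hw _)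
  calc _ = ((B * w) * (A * z))⁻¹ * ((A * z) * (B * w)) := by group
    _ = (z * w)⁻¹ * (((B * A)⁻¹ * (A * B)) * (z * w)) := by rw [e1, e2]; group
    _ = _ := by rw [← c.eq]; group

open scoped commutatorElement in
/-- Abstract version of the main result. -/
theorem main {H : Type*} [Group H] (h : JR q κ A B C) (hgen : Subgroup.closure {A, B} = ⊤)
    (hsym : ∀ n : ℤ, A ^ n = 1 ↔ B ^ n = 1) {A' B' C' : H} (h' : JR q κ A' B' C')
    (hA : A' ^ ((q : ℤ) ^ 2) = 1) (hB : B' ^ (q : ℤ) = 1)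
    (hn : ∀ n : ℤ, A' ^ n = 1 → (q : ℤ) ^ 2 ∣ n) (φ ψ : G →* H)
    (a : φ A = A') (b : φ B = B') (a' : ψ A = B') (b' : ψ B = A')
    {u : G} (hu : u ∈ Subgroup.upperCentralSeries G 2) :
    (A * u) ^ q = A ^ q ∧ (B * u) ^ q = B ^ q := by
  have c : φ C = C' := by rw [h.eqC, h'.eqC]; simp [a, b]
  have c' : ψ C = C'⁻¹ := by rw [h.eqC, h'.eqC]; simp [a', b']; group
  rw [Subgroup.mem_upperCentralSeries_succ_iff, Subgroup.upperCentralSeries_one] at hu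
  have hz : ∀ y g : G, Commute ⁅u, y⁆ g := fun y g => (Subgroup.mem_center_iff.mp (hu y) g).symm
  have hs : ∀ y : G, SemiconjBy y (u * ⁅u, y⁆) u := by
    intro y
    unfold SemiconjBy
    rw [← mul_assoc, ← (hz y (y * u)).eq, commutatorElement_def]; group
  have hcomm : Commute u C := by
    have e1 : u * A = ⁅u, A⁆ * (A * u) := by rw [commutatorElement_def]; group
    have e2 : u * B = ⁅u, B⁆ * (B * u) := by rw [commutatorElement_def]; group
    have s1 : SemiconjBy u A (A * ⁅u, A⁆) := by
      unfold SemiconjBy; rw [e1, ← (hz A A).eq, mul_assoc]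
    have s2 : SemiconjBy u B (B * ⁅u, B⁆) := by
      unfold SemiconjBy; rw [e2, ← (hz B B).eq, mul_assoc]
    have s3 := ((s1.inv_right.mul_right s2.inv_right).mul_right s1).mul_right s2
    rw [← h.eqC] at s3
    have : (A * ⁅u, A⁆)⁻¹ * (B * ⁅u, B⁆)⁻¹ * (A * ⁅u, A⁆) * (B * ⁅u, B⁆) = C := by
      rw [h.eqC]
      exact comm_central (hz A) (hz B)
    rw [this] at s3
    exact s3
  obtain ⟨i, j, x, hx, hux⟩ := h.decomp hgen u
  have di : (q : ℤ) ∣ i := by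
    apply h'.model_dvd hn
    have e1 : A' ^ (i : ℤ) = φ u * (B' ^ j * φ x)⁻¹ := by
      rw [hux]; simp [a, b, mul_assoc]
    rw [e1]
    refine Commute.mul_right ?_ (Commute.inv_right (Commute.mul_right ?_ ?_))
    · have := hcomm.symm.map φ
      rwa [c] at this
    · exact (h'.comm_BC hB).pow_right j
    · exact comm_of_K h' hA hB φ a b c hx
  have dj : (q : ℤ) ∣ j := by
    apply h'.model_dvd hn
    have e1 : A' ^ (j : ℤ) = (B' ^ i)⁻¹ * ψ u * (ψ x)⁻¹ := by
      rw [hux]; simp [a', b', mul_assoc]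
    rw [e1]
    refine Commute.mul_right (Commute.mul_right ?_ ?_) (Commute.inv_right ?_)
    · exact ((h'.comm_BC hB).pow_right i).inv_right
    · have := hcomm.symm.map ψ
      rw [c'] at this
      exact Commute.inv_left_iff.mp this
    · have hx' : x ∈ K q B A C⁻¹ := by rw [K_symm]; exact hx
      exact comm_of_K h' hA hB ψ b' a' (by rw [map_inv, c', inv_inv]) hx'
  have huK : u ∈ K q A B C := by
    rw [hux]
    obtain ⟨i', hi⟩ := di
    obtain ⟨j', hj⟩ := dj
    refine mul_mem (mul_mem ?_ ?_) hx
    · rw [← zpow_natCast, hi]; exact a_mem _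
    · rw [← zpow_natCast, hj]; exact b_mem _
  obtain ⟨i', j', k', e⟩ := h.mem_K huK
  obtain ⟨k, hk⟩ := h.exists_nat_pow k'
  rw [hk] at e
  have huq := h.upow hsym e (hz A) (hs A) (hz B) (hs B)
  have fin : ∀ y : G, (y * u) ^ q = y ^ q := by
    intro y
    have e1 := (hs y).eq
    have e2 := mul_pow_class_two (e1.symm.trans (mul_assoc _ _ _).symm) (hz y y) (hz y u) q
    have e3 : ⁅u, y⁆ ^ q = 1 := by
      have := ((hs y).pow_right q).eq
      rw [(hz y u).symm.mul_pow, huq, one_mul, one_mul] at this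
      exact mul_eq_left.mp this
    obtain ⟨r, hr⟩ := choose_odd q h.odd
    rw [e2, huq, hr, pow_mul, e3]; simp
  exact ⟨fin A, fin B⟩

end JR

section Model

variable {R S : Type*} [CommRing R] [CommRing S] (r : R →+* S) (ι : S →+ R) (q κ h : R)

/-- model of `A` -/
def mA : Equiv.Perm (R × S) where
  toFun v := (v.1 - 1 + κ * ι v.2, v.2)
  invFun v := (v.1 + 1 - κ * ι v.2, v.2)
  left_inv v := by
    ext
    · simp only; ring
    · rfl
  right_inv v := by
    ext
    · simp only; ring
    · rfl

/-- model of `C` -/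
def mC : Equiv.Perm (R × S) where
  toFun v := (v.1, v.2 - 1)
  invFun v := (v.1, v.2 + 1)
  left_inv v := by ext <;> simp
  right_inv v := by ext <;> simp

/-- model of `B` -/
def mB (hq : q * q = 0) (hr : r q = 0) : Equiv.Perm (R × S) where
  toFun v := (v.1 + κ * q * h * (v.1 * (v.1 - 1)), v.2 - r v.1)
  invFun v := (v.1 - κ * q * h * (v.1 * (v.1 - 1)), v.2 + r v.1)
  left_inv v := by
    obtain ⟨x, y⟩ := v
    ext
    · simp only
      linear_combination (-κ * h * κ * h * x * (x - 1) *
        ((2 * x - 1) + κ * q * h * (x * (x - 1)))) * hq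
    · simp [hr]
  right_inv v := by
    obtain ⟨x, y⟩ := v
    ext
    · simp only
      linear_combination (-κ * h * κ * h * x * (x - 1) *
        ((2 * x - 1) - κ * q * h * (x * (x - 1)))) * hq
    · simp [hr]

theorem mA_pow (n : ℕ) (v : R × S) :
    ((mA ι κ) ^ n) v = (v.1 - n + n * κ * ι v.2, v.2) := by
  induction n with
  | zero => simp
  | succ n ih =>
    rw [pow_succ', Equiv.Perm.mul_apply, ih]
    ext
    · simp [mA]; ring
    · simp [mA]

theorem mA_zpow (n : ℤ) (v : R × S) :
    ((mA ι κ) ^ n) v = (v.1 - n + n * κ * ι v.2, v.2) := by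
  obtain ⟨n, rfl | rfl⟩ := n.eq_nat_or_neg
  · rw [zpow_natCast, mA_pow]; simp
  · rw [zpow_neg, zpow_natCast, Equiv.Perm.inv_eq_iff_eq, mA_pow]
    ext
    · simp only; push_cast; ring
    · simp

theorem mB_pow (hq : q * q = 0) (hr : r q = 0) (n : ℕ) (v : R × S) :
    ((mB r q κ h hq hr) ^ n) v = (v.1 + n * (κ * q * h * (v.1 * (v.1 - 1))), v.2 - n * r v.1) := by
  induction n with
  | zero => simp
  | succ n ih =>
    rw [pow_succ', Equiv.Perm.mul_apply, ih]
    obtain ⟨x, y⟩ := v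
    ext
    · simp only [mB, Equiv.coe_fn_mk]
      push_cast
      linear_combination (κ * h * κ * h * x * (x - 1) * n *
        ((2 * x - 1) + n * κ * q * h * (x * (x - 1)))) * hq
    · simp [mB, hr]; ring

end Model

theorem exists_model (q : ℕ) (κ : ℤ) (hodd : Odd q) (hcop : IsCoprime κ (q : ℤ)) :
    ∃ A B C : Equiv.Perm (ZMod (q ^ 2) × ZMod q), JR q κ A B C ∧ A ^ ((q : ℤ) ^ 2) = 1 ∧
      B ^ (q : ℤ) = 1 ∧ ∀ n : ℤ, A ^ n = 1 → (q : ℤ) ^ 2 ∣ n := by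
  let r : ZMod (q ^ 2) →+* ZMod q := ZMod.castHom (Dvd.intro_left q (by ring)) (ZMod q)
  have hqq : (q : ZMod (q ^ 2)) * q = 0 := by
    have := ZMod.natCast_self (q ^ 2)
    rw [← this]; push_cast; ring
  let ι : ZMod q →+ ZMod (q ^ 2) := ZMod.lift q
    ⟨((AddMonoidHom.mulLeft (q : ZMod (q ^ 2))).comp (Int.castAddHom (ZMod (q ^ 2)))),
      by simpa using hqq⟩
  have hι : ∀ x : ℤ, ι (x : ZMod q) = q * x := by
    intro x; simp [ι]
  have hιr : ∀ x, ι (r x) = q * x := by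
    intro x
    obtain ⟨x, rfl⟩ := ZMod.intCast_surjective x
    rw [map_intCast, hι]
  have hrι : ∀ y, r (ι y) = 0 := by
    intro y
    obtain ⟨y, rfl⟩ := ZMod.intCast_surjective y
    rw [hι]; simp
  have hqι : ∀ y, q * ι y = 0 := by
    intro y
    obtain ⟨y, rfl⟩ := ZMod.intCast_surjective y
    rw [hι, ← mul_assoc, hqq, zero_mul]
  have hι1 : ι 1 = q := by simpa using hι 1
  have hr : r (q : ZMod (q ^ 2)) = 0 := by simp
  obtain ⟨t, ht⟩ : ∃ t : ℕ, q ^ 2 = 2 * t + 1 := hodd.pow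
  obtain ⟨h, hh⟩ : ∃ h : ZMod (q ^ 2), 2 * h = 1 := by
    refine ⟨-(t : ZMod (q ^ 2)), ?_⟩
    have := ZMod.natCast_self (q ^ 2)
    rw [ht] at this
    rw [ht]
    push_cast at this
    linear_combination -this
  have hBq : (mB r (q : ZMod (q ^ 2)) (κ : ZMod (q ^ 2)) h hqq hr) ^ (q : ℤ) = 1 := by
    rw [zpow_natCast]
    ext1 v
    rw [mB_pow]
    ext
    · simp only [Equiv.Perm.coe_one, id_eq]
      linear_combination (κ : ZMod (q ^ 2)) * h * (v.1 * (v.1 - 1)) * hqq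
    · simp
  have hAq : (mA ι (κ : ZMod (q ^ 2))) ^ ((q : ℤ) ^ 2) = 1 := by
    ext1 v
    rw [mA_zpow]
    have : (((q : ℤ) ^ 2 : ℤ) : ZMod (q ^ 2)) = 0 := by
      push_cast; linear_combination hqq
    rw [this]
    simp
  refine ⟨mA ι κ, mB r q κ h hqq hr, mC, ?_, hAq, hBq, ?_⟩
  · refine ⟨?_, ?_, ?_, ?_, ?_, hodd, hcop⟩
    · unfold SemiconjBy
      ext1 ⟨x, y⟩
      ext
      · simp only [Equiv.Perm.mul_apply, mA, mB, mC, Equiv.coe_fn_mk, map_sub, hι1, hιr]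
        have e := hqι y
        linear_combination ((κ : ZMod (q ^ 2)) * h * (κ * (2 * x - 3) + κ * κ * (ι y - q))) * e +
          (κ * h * (-κ * (2 * x - 3) - κ * κ * (ι y - q))) * hqq + (κ * q - κ * q * x) * hh
      · simp only [Equiv.Perm.mul_apply, mA, mB, mC, Equiv.coe_fn_mk, map_sub, map_add, map_mul,
          hι1, hr, hrι, map_one]
        ring
    · unfold SemiconjBy
      ext1 ⟨x, y⟩
      rw [Equiv.Perm.mul_apply, Equiv.Perm.mul_apply, mA_zpow]
      ext
      · simp only [mA, mC, Equiv.coe_fn_mk, map_sub, hι1]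
        push_cast
        linear_combination (κ : ZMod (q ^ 2)) * κ * hqι y
      · simp [mA, mC]
    · rw [zpow_eq_of_dvd (y := 1) hBq κ (by ring), zpow_one]
      unfold SemiconjBy
      ext1 ⟨x, y⟩
      ext
      · simp [mB, mC]
      · simp only [Equiv.Perm.mul_apply, mB, mC, Equiv.coe_fn_mk]
        ring
    · exact (zpow_eq_of_dvd (y := 0) hAq (q : ℤ) (by ring)).trans (zpow_zero _)
    · exact (zpow_eq_of_dvd (y := 0) hBq ((q : ℤ) ^ 2) (by ring)).trans (zpow_zero _)
  · intro n hn
    have := congrArg (fun f => (f (0, 0)).1) hn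
    simp only [mA_zpow] at this
    simp at this
    have h2 := (ZMod.intCast_zmod_eq_zero_iff_dvd n (q ^ 2)).mp this
    exact_mod_cast h2

theorem jRels_lift {H : Type*} [Group H] {p m : ℕ} {κ : ℤ} {A B C : H}
    (h : JR (p ^ m) κ A B C) :
    ∀ x ∈ jRels p m (1 + κ * (p : ℤ) ^ m), (FreeGroup.lift ![A, B]) x = 1 := by
  have hC := h.eqC
  have hA := h.hA.eq
  have hB := h.hB.eq
  have hA3 := h.A3
  have hB3 := h.B3
  push_cast at hA hB
  have e : ((p ^ m : ℕ) : ℤ) ^ 3 = (p ^ (3 * m) : ℕ) := by push_cast; ring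
  rw [e, zpow_natCast] at hA3 hB3
  rintro x (rfl | rfl | rfl | rfl)
  · simp only [map_mul, map_inv, map_zpow, FreeGroup.lift_apply_of, Matrix.cons_val_zero,
      Matrix.cons_val_one]
    rw [← hC, mul_assoc C⁻¹, ← hA]; group
  · simp only [map_mul, map_inv, map_zpow, FreeGroup.lift_apply_of, Matrix.cons_val_zero,
      Matrix.cons_val_one]
    rw [← hC, hB]; group
  · simpa using hA3
  · simpa using hB3

theorem J_JR (p m : ℕ) (hodd : Odd p) (κ : ℤ) (hk : IsCoprime κ ((p ^ m : ℕ) : ℤ)) :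
    JR (p ^ m) κ (PresentedGroup.of 0 : JGroup p m (1 + κ * (p : ℤ) ^ m)) (PresentedGroup.of 1)
      ((PresentedGroup.of 0)⁻¹ * (PresentedGroup.of 1)⁻¹ * (PresentedGroup.of 0) *
        (PresentedGroup.of 1)) := by
  set A : JGroup p m (1 + κ * (p : ℤ) ^ m) := PresentedGroup.of 0 with hA
  set B : JGroup p m (1 + κ * (p : ℤ) ^ m) := PresentedGroup.of 1 with hB
  have rel : ∀ x ∈ jRels p m (1 + κ * (p : ℤ) ^ m), PresentedGroup.mk _ x = 1 :=
    fun x hx => PresentedGroup.one_of_mem hx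
  have e : ((p ^ m : ℕ) : ℤ) ^ 3 = (p ^ (3 * m) : ℕ) := by push_cast; ring
  refine ⟨?_, ?_, ?_, ?_, ?_, hodd.pow, hk⟩
  · unfold SemiconjBy; group
  · have := rel _ (Or.inl rfl)
    simp only [map_mul, map_inv, map_zpow] at this
    have h2 := mul_inv_eq_one.mp this
    push_cast
    unfold SemiconjBy
    change _ = A ^ (1 + κ * (p : ℤ) ^ m) at h2
    rw [← h2]
    change _ * ((A⁻¹ * B⁻¹ * A * B)⁻¹ * A * (A⁻¹ * B⁻¹ * A * B)) = _
    group
  · have := rel _ (Or.inr (Or.inl rfl))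
    simp only [map_mul, map_inv, map_zpow] at this
    have h2 := mul_inv_eq_one.mp this
    push_cast
    unfold SemiconjBy
    change _ = B ^ (1 + κ * (p : ℤ) ^ m) at h2
    rw [← h2]
    change _ = ((A⁻¹ * B⁻¹ * A * B) * B * (A⁻¹ * B⁻¹ * A * B)⁻¹) * _
    group
  · rw [e, zpow_natCast]
    have := rel _ (Or.inr (Or.inr (Or.inl rfl)))
    rwa [map_pow] at this
  · rw [e, zpow_natCast]
    have := rel _ (Or.inr (Or.inr (Or.inr rfl)))
    rwa [map_pow] at this

theorem JGroup_pow_mul_central (p m : ℕ) (hp : p.Prime) (hodd : Odd p) (hm : 1 ≤ m)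
    (k α : ℤ) (hk : ¬ (p : ℤ) ∣ k) (hαk : α = 1 + k * (p : ℤ) ^ m) :
    let A : JGroup p m α := PresentedGroup.of 0
    let B : JGroup p m α := PresentedGroup.of 1
    ∀ u : JGroup p m α, u ∈ upperCentralSeries (JGroup p m α) 2 →
      (A * u) ^ (p ^ m) = A ^ (p ^ m) ∧ (B * u) ^ (p ^ m) = B ^ (p ^ m) := by
  subst hαk
  intro A B u hu
  have hcop : IsCoprime k ((p ^ m : ℕ) : ℤ) := by
    push_cast
    apply IsCoprime.pow_right
    exact ((Nat.prime_iff_prime_int.mp hp).coprime_iff_not_dvd.mpr hk).symm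
  have h := J_JR p m hodd k hcop
  obtain ⟨A', B', C', h', hA, hB, hn⟩ := exists_model (p ^ m) k hodd.pow hcop
  let φ := PresentedGroup.toGroup (jRels_lift h')
  let ψ := PresentedGroup.toGroup (jRels_lift h'.symm)
  let σ := PresentedGroup.toGroup (jRels_lift h.symm)
  have σA : σ A = B := by simp [σ, A, B]
  have σB : σ B = A := by simp [σ, A, B]
  refine h.main ?_ ?_ h' hA hB hn φ ψ ?_ ?_ ?_ ?_ hu
  · rw [← PresentedGroup.closure_range_of]
    congr 1
    ext x
    simp [eq_comm]
  · intro n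
    constructor
    · intro e
      have := congrArg σ e
      rwa [map_zpow, map_one, σA] at this
    · intro e
      have := congrArg σ e
      rwa [map_zpow, map_one, σB] at this
  · simp [φ]
  · simp [φ]
  · simp [ψ]
  · simp [ψ]
end
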